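/- arXiv:1810.12232 — 4 statements merged into one kernel-verified Lean document; each statement's English description precedes it below -/
import Mathlib

section
/- There exists a constant C > 0, depending only on Ω, ω₀, ω and η⁰, such that for every T > 0, every bounded measurable potential a, and every classical nonnegative solution q of the adjoint heat equation with Dirichlet boundary condition, one has ∫_Ω q(0,x)² dx ≤ exp(C(1 + 1/T + T‖a‖_∞ + ‖a‖_∞^{1/2})) (∫₀^T ∫_ω q(t,x) dx dt)². -/
open MeasureTheory Real Set RealInnerProductSpace

noncomputable def spaceLaplacian {N : ℕ} (f : EuclideanSpace ℝ (Fin N) → ℝ)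
    (x : EuclideanSpace ℝ (Fin N)) : ℝ :=
  ∑ i : Fin N, fderiv ℝ (fun y => fderiv ℝ f y (EuclideanSpace.single i 1)) x
    (EuclideanSpace.single i 1)

section Part1

open Filter Topology

lemma glue_hasDerivAt (e : ℝ) (f f' : ℝ → ℝ) (h : ∀ s, e ≤ s → HasDerivAt f (f' s) s)
    (h0 : f e = 0) (h1 : f' e = 0) (s : ℝ) :
    HasDerivAt (fun s => if s ≤ e then 0 else f s) (if s ≤ e then 0 else f' s) s := by
  rcases lt_trichotomy s e with hs | hs | hs
  · rw [if_pos hs.le]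
    refine (hasDerivAt_const s (0:ℝ)).congr_of_eventuallyEq ?_
    filter_upwards [Iio_mem_nhds hs] with y hy
    simp [le_of_lt (mem_Iio.1 hy)]
  · subst hs
    rw [if_pos le_rfl]
    have A : HasDerivWithinAt (fun y => if y ≤ s then 0 else f y) 0 (Iic s) s := by
      refine (hasDerivWithinAt_const s (Iic s) (0:ℝ)).congr (fun y hy => ?_) ?_
      · simp only [mem_Iic] at hy; simp [hy]
      · simp
    have B : HasDerivWithinAt (fun y => if y ≤ s then 0 else f y) 0 (Ici s) s := by
      have := (h s le_rfl).hasDerivWithinAt (s := Ici s)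
      rw [h1] at this
      refine this.congr (fun y hy => ?_) ?_
      · simp only [mem_Ici] at hy
        by_cases hys : y ≤ s
        · have : y = s := le_antisymm hys hy
          subst this; simp [h0]
        · simp [hys]
      · simp [h0]
    have := A.union B
    rw [Iic_union_Ici, hasDerivWithinAt_univ] at this
    exact this
  · rw [if_neg (not_le.2 hs)]
    refine (h s hs.le).congr_of_eventuallyEq ?_
    filter_upwards [Ioi_mem_nhds hs] with y hy
    simp [not_le.2 (mem_Ioi.1 hy)]

noncomputable def G0 (e s : ℝ) : ℝ := if s ≤ e then 0 else (s - e)^3 / s^2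
noncomputable def G1 (e s : ℝ) : ℝ := if s ≤ e then 0 else (s - e)^2 * (s + 2*e) / s^3
noncomputable def G2 (e s : ℝ) : ℝ := if s ≤ e then 0 else 6 * e^2 * (s - e) / s^4

lemma G0_deriv {e : ℝ} (he : 0 < e) (s : ℝ) : HasDerivAt (G0 e) (G1 e s) s := by
  refine glue_hasDerivAt e (fun s => (s - e)^3 / s^2) (fun s => (s - e)^2 * (s + 2*e) / s^3)
    (fun s hs => ?_) (by simp) (by simp) s
  have hs0 : s ≠ 0 := (he.trans_le hs).ne'
  have h1 : HasDerivAt (fun s : ℝ => (s-e)^3) (3*(s-e)^2) s := by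
    simpa using ((hasDerivAt_id s).sub_const e).fun_pow 3
  have h2 : HasDerivAt (fun s : ℝ => s^2) (2*s) s := by
    simpa using (hasDerivAt_id s).fun_pow 2
  convert! h1.div h2 (by positivity) using 1
  field_simp; ring

lemma G1_deriv {e : ℝ} (he : 0 < e) (s : ℝ) : HasDerivAt (G1 e) (G2 e s) s := by
  refine glue_hasDerivAt e (fun s => (s - e)^2 * (s + 2*e) / s^3)
    (fun s => 6 * e^2 * (s - e) / s^4) (fun s hs => ?_) (by simp) (by simp) s
  have hs0 : s ≠ 0 := (he.trans_le hs).ne'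
  have h1 : HasDerivAt (fun s : ℝ => (s-e)^2) (2*(s-e)) s := by
    simpa using ((hasDerivAt_id s).sub_const e).fun_pow 2
  have h3 : HasDerivAt (fun s : ℝ => s + 2*e) 1 s := by
    simpa using (hasDerivAt_id s).add_const (2*e)
  have h2 : HasDerivAt (fun s : ℝ => s^3) (3*s^2) s := by
    simpa using (hasDerivAt_id s).fun_pow 3
  convert! (h1.fun_mul h3).div h2 (by positivity) using 1
  field_simp; ring

lemma G2_cont {e : ℝ} (he : 0 < e) : Continuous (G2 e) := by
  have : G2 e = fun s => 6 * e^2 * (max s e - e) / (max s e)^4 := by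
    funext s
    unfold G2
    split_ifs with h
    · simp [max_eq_right h]
    · simp [max_eq_left (not_le.1 h).le]
  rw [this]
  refine Continuous.div (by fun_prop) (by fun_prop) (fun s => ?_)
  have : 0 < max s e := lt_max_of_lt_right he
  positivity

lemma G2_nonneg {e : ℝ} (he : 0 < e) (s : ℝ) : 0 ≤ G2 e s := by
  unfold G2
  split_ifs with h
  · exact le_rfl
  · have : 0 ≤ s - e := by linarith
    positivity

lemma G0_mem {e : ℝ} (he : 0 < e) {s : ℝ} (hs : 0 ≤ s) : |G0 e s| ≤ s := by
  unfold G0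
  split_ifs with h
  · simpa
  · push Not at h
    have h0 : 0 < s := by linarith
    have h1 : 0 ≤ s - e := by linarith
    rw [abs_of_nonneg (by positivity), div_le_iff₀ (by positivity)]
    calc (s-e)^3 ≤ s^3 := by gcongr; linarith
      _ = s * s^2 := by ring

lemma G1_mem {e : ℝ} (he : 0 < e) (s : ℝ) : |G1 e s| ≤ 1 := by
  unfold G1
  split_ifs with h
  · simp
  · push Not at h
    have h0 : 0 < s := by linarith
    have h1 : 0 ≤ s - e := by linarith
    rw [abs_of_nonneg (by positivity), div_le_iff₀ (by positivity)]
    nlinarith [mul_pos he he, mul_pos he h0, mul_pos (mul_pos he he) he, mul_nonneg (mul_pos he he).le h1]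

lemma G0_tendsto {s : ℝ} (hs : 0 ≤ s) :
    Tendsto (fun n : ℕ => G0 (1/((n:ℝ)+1)) s) atTop (𝓝 s) := by
  have hn := tendsto_one_div_add_atTop_nhds_zero_nat (𝕜 := ℝ)
  rcases hs.eq_or_lt with rfl | hs
  · refine tendsto_const_nhds.congr (fun n => ?_)
    have : (0:ℝ) ≤ 1/((n:ℝ)+1) := by positivity
    simp only [G0, if_pos this]
  · have : Tendsto (fun n : ℕ => (s - 1/((n:ℝ)+1))^3 / s^2) atTop (𝓝 ((s-0)^3/s^2)) :=
      ((tendsto_const_nhds.sub hn).pow 3).div_const _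
    have e1 : (s-0)^3/s^2 = s := by field_simp; ring
    rw [e1] at this
    refine this.congr' ?_
    filter_upwards [hn.eventually (gt_mem_nhds hs)] with n h
    simp only [G0, if_neg (not_le.2 h)]

lemma G1_tendsto {s : ℝ} (hs : 0 < s) :
    Tendsto (fun n : ℕ => G1 (1/((n:ℝ)+1)) s) atTop (𝓝 1) := by
  have hn := tendsto_one_div_add_atTop_nhds_zero_nat (𝕜 := ℝ)
  have : Tendsto (fun n : ℕ => (s - 1/((n:ℝ)+1))^2 * (s + 2*(1/((n:ℝ)+1))) / s^3) atTop
      (𝓝 ((s-0)^2 * (s+2*0)/s^3)) :=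
    (((tendsto_const_nhds.sub hn).pow 2).mul (tendsto_const_nhds.add (hn.const_mul 2))).div_const _
  have e1 : (s-0)^2 * (s+2*0)/s^3 = 1 := by field_simp; ring
  rw [e1] at this
  refine this.congr' ?_
  filter_upwards [hn.eventually (gt_mem_nhds hs)] with n h
  simp only [G1, if_neg (not_le.2 h)]

lemma int_deriv_zero {N : ℕ} {Ω K : Set (EuclideanSpace ℝ (Fin N))} (hΩ : IsOpen Ω)
    (hK : IsCompact K) (hKΩ : K ⊆ Ω) (F : EuclideanSpace ℝ (Fin N) → ℝ)
    (F' : EuclideanSpace ℝ (Fin N) → (EuclideanSpace ℝ (Fin N) →L[ℝ] ℝ))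
    (v : EuclideanSpace ℝ (Fin N))
    (hF : ∀ x ∈ Ω, HasFDerivAt F (F' x) x) (hF0 : ∀ x ∈ Ω, x ∉ K → F x = 0)
    (hc : ContinuousOn (fun x => F' x v) Ω) : 
    IntegrableOn (fun x => F' x v) Ω ∧ ∫ x in Ω, F' x v = 0 := by
  have hz : ∀ x ∈ Kᶜ, Ω.indicator F =ᶠ[𝓝 x] fun _ => 0 := by
    intro x hx
    filter_upwards [hK.isClosed.isOpen_compl.mem_nhds hx] with y hy
    by_cases hyΩ : y ∈ Ω
    · rw [indicator_of_mem hyΩ, hF0 y hyΩ hy]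
    · rw [indicator_of_notMem hyΩ]
  have hin : ∀ x ∈ Ω, Ω.indicator F =ᶠ[𝓝 x] F := by
    intro x hx
    filter_upwards [hΩ.mem_nhds hx] with y hy
    rw [indicator_of_mem hy]
  have hd : ∀ x, HasFDerivAt (Ω.indicator F) (Ω.indicator F' x) x := by
    intro x
    by_cases hx : x ∈ Ω
    · rw [indicator_of_mem hx]
      exact (hF x hx).congr_of_eventuallyEq (hin x hx)
    · rw [indicator_of_notMem hx]
      exact (hasFDerivAt_const (0:ℝ) x).congr_of_eventuallyEq (hz x (fun h => hx (hKΩ h)))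
  have hz' : ∀ x ∈ Kᶜ, Ω.indicator F' x = 0 := by
    intro x hx
    exact (hd x).unique ((hasFDerivAt_const (0:ℝ) x).congr_of_eventuallyEq (hz x hx))
  have hcont : Continuous (fun x => Ω.indicator F' x v) := by
    rw [continuous_iff_continuousAt]
    intro x
    by_cases hx : x ∈ K
    · have h1 : ContinuousAt (fun x => F' x v) x := hc.continuousAt (hΩ.mem_nhds (hKΩ hx))
      refine h1.congr ?_
      filter_upwards [hΩ.mem_nhds (hKΩ hx)] with y hy
      rw [indicator_of_mem hy]
    · refine (continuousAt_const (y := (0:ℝ))).congr ?_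
      filter_upwards [hK.isClosed.isOpen_compl.mem_nhds hx] with y hy
      rw [hz' y hy]; simp
  have hsupp : HasCompactSupport (fun x => Ω.indicator F' x v) :=
    HasCompactSupport.intro hK (fun x hx => by rw [hz' x hx]; simp)
  have hint : Integrable (fun x => Ω.indicator F' x v) := hcont.integrable_of_hasCompactSupport hsupp
  have hsupp0 : HasCompactSupport (Ω.indicator F) :=
    HasCompactSupport.intro hK (fun x hx => (hz x hx).self_of_nhds)
  have hcont0 : Continuous (Ω.indicator F) :=
    continuous_iff_continuousAt.2 fun x => (hd x).continuousAt
  have hint0 : Integrable (Ω.indicator F) := hcont0.integrable_of_hasCompactSupport hsupp0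
  have key := integral_bilinear_hasFDerivAt_right_eq_neg_left_of_integrable (μ := volume)
    (f := fun _ : EuclideanSpace ℝ (Fin N) => (1:ℝ)) (f' := fun _ => 0)
    (g := Ω.indicator F) (g' := Ω.indicator F') (v := v)
    (B := ContinuousLinearMap.mul ℝ ℝ) (by simp) (by simpa using hint) (by simpa using hint0)
    (fun x _ => hasFDerivAt_const _ _) (fun x _ => hd x)
  have e1 : (fun x => Ω.indicator F' x v) = Ω.indicator (fun x => F' x v) := by
    funext x
    by_cases hx : x ∈ Ω <;> simp [hx]
  rw [e1] at hint
  refine ⟨(integrable_indicator_iff hΩ.measurableSet).1 hint, ?_⟩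
  rw [← integral_indicator hΩ.measurableSet, ← e1]
  simpa using key

structure C2On {N : ℕ} (s : Set (EuclideanSpace ℝ (Fin N))) (u : EuclideanSpace ℝ (Fin N) → ℝ) :
    Prop where
  d1 : ∀ x ∈ s, DifferentiableAt ℝ u x
  d2 : ∀ x ∈ s, DifferentiableAt ℝ (fderiv ℝ u) x
  c1 : ContinuousOn (fderiv ℝ u) s
  c2 : ContinuousOn (fderiv ℝ (fderiv ℝ u)) s

lemma fderiv_apply_has {N : ℕ} {u : EuclideanSpace ℝ (Fin N) → ℝ} {x : EuclideanSpace ℝ (Fin N)}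
    (h : DifferentiableAt ℝ (fderiv ℝ u) x) (v : EuclideanSpace ℝ (Fin N)) :
    HasFDerivAt (fun y => fderiv ℝ u y v) ((fderiv ℝ (fderiv ℝ u) x).flip v) x := by
  have := h.hasFDerivAt.clm_apply (hasFDerivAt_const v x)
  simpa using this

lemma lap_eq {N : ℕ} {u : EuclideanSpace ℝ (Fin N) → ℝ} {x : EuclideanSpace ℝ (Fin N)}
    (h : DifferentiableAt ℝ (fderiv ℝ u) x) :
    spaceLaplacian u x = ∑ i : Fin N, fderiv ℝ (fderiv ℝ u) x (EuclideanSpace.single i 1)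
      (EuclideanSpace.single i 1) := by
  unfold spaceLaplacian
  refine Finset.sum_congr rfl fun i _ => ?_
  rw [(fderiv_apply_has h _).fderiv]
  rfl

lemma C2On.contLap {N : ℕ} {s : Set (EuclideanSpace ℝ (Fin N))} {u : EuclideanSpace ℝ (Fin N) → ℝ}
    (h : C2On s u) : ContinuousOn (spaceLaplacian u) s := by
  have : ContinuousOn (fun x => ∑ i : Fin N, fderiv ℝ (fderiv ℝ u) x (EuclideanSpace.single i 1)
      (EuclideanSpace.single i 1)) s :=
    continuousOn_finsetSum _ fun i _ => (h.c2.clm_apply continuousOn_const).clm_apply continuousOn_const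
  exact this.congr fun x hx => lap_eq (h.d2 x hx)

lemma C2On.cont {N : ℕ} {s : Set (EuclideanSpace ℝ (Fin N))} {u : EuclideanSpace ℝ (Fin N) → ℝ}
    (h : C2On s u) : ContinuousOn u s := fun x hx => (h.d1 x hx).continuousAt.continuousWithinAt

lemma C2On.of_contDiff {N : ℕ} {s : Set (EuclideanSpace ℝ (Fin N))}
    {u : EuclideanSpace ℝ (Fin N) → ℝ} (h : ContDiff ℝ 2 u) : C2On s u := by
  have h1 : ContDiff ℝ 1 (fderiv ℝ u) := h.fderiv_right (by norm_num)
  exact ⟨fun x _ => (h.differentiable (by norm_num)) x,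
    fun x _ => (h1.differentiable (by norm_num)) x, h1.continuous.continuousOn,
    (h1.continuous_fderiv (by norm_num)).continuousOn⟩

lemma intOn {N : ℕ} {Ω : Set (EuclideanSpace ℝ (Fin N))} (hΩb : Bornology.IsBounded Ω)
    {f : EuclideanSpace ℝ (Fin N) → ℝ} (h : ContinuousOn f (closure Ω)) : IntegrableOn f Ω :=
  (h.integrableOn_compact hΩb.isCompact_closure).mono_set subset_closure

lemma green_le {N : ℕ} {Ω : Set (EuclideanSpace ℝ (Fin N))} (hΩ : IsOpen Ω)
    (hΩb : Bornology.IsBounded Ω) {u v : EuclideanSpace ℝ (Fin N) → ℝ}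
    (hu : C2On (closure Ω) u) (hv : C2On (closure Ω) v)
    (hu0 : ∀ x ∈ Ω, 0 ≤ u x) (hv0 : ∀ x ∈ Ω, 0 ≤ v x) (hub : ∀ x ∈ frontier Ω, u x = 0)
    (hul : ∀ x ∈ Ω, u x = 0 → spaceLaplacian u x = 0) :
    ∫ x in Ω, v x * spaceLaplacian u x ≤ ∫ x in Ω, u x * spaceLaplacian v x := by
  have hcomp : IsCompact (closure Ω) := hΩb.isCompact_closure
  have step : ∀ e : ℝ, 0 < e → ∫ x in Ω, v x * (G1 e (u x) * spaceLaplacian u x) ≤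
      ∫ x in Ω, G0 e (u x) * spaceLaplacian v x := by
    intro e he
    have cG0 : Continuous (G0 e) := continuous_iff_continuousAt.2 fun s => (G0_deriv he s).continuousAt
    have cG1 : Continuous (G1 e) := continuous_iff_continuousAt.2 fun s => (G1_deriv he s).continuousAt
    have cG2 := G2_cont he
    set K := closure Ω ∩ u ⁻¹' (Ici e) with hKdef
    have hK : IsCompact K := hcomp.of_isClosed_subset
      (hu.cont.preimage_isClosed_of_isClosed isClosed_closure isClosed_Ici) inter_subset_left
    have hKΩ : K ⊆ Ω := by
      rintro x ⟨hx1, hx2⟩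
      by_contra hx
      have := hub x ⟨hx1, by rwa [hΩ.interior_eq]⟩
      simp only [mem_preimage, mem_Ici] at hx2
      linarith
    have main : ∀ i : Fin N, IntegrableOn (fun x => 
        G0 e (u x) * fderiv ℝ (fderiv ℝ v) x (EuclideanSpace.single i 1) (EuclideanSpace.single i 1)
        - v x * (G2 e (u x) * (fderiv ℝ u x (EuclideanSpace.single i 1))^2)
        - v x * (G1 e (u x) * fderiv ℝ (fderiv ℝ u) x (EuclideanSpace.single i 1) (EuclideanSpace.single i 1))) Ω
        ∧ ∫ x in Ω, (
        G0 e (u x) * fderiv ℝ (fderiv ℝ v) x (EuclideanSpace.single i 1) (EuclideanSpace.single i 1)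
        - v x * (G2 e (u x) * (fderiv ℝ u x (EuclideanSpace.single i 1))^2)
        - v x * (G1 e (u x) * fderiv ℝ (fderiv ℝ u) x (EuclideanSpace.single i 1) (EuclideanSpace.single i 1))) = 0 := by
      intro i
      set w : EuclideanSpace ℝ (Fin N) := EuclideanSpace.single i 1 with hw
      have hder : ∀ x ∈ Ω, HasFDerivAt
          (fun x => G0 e (u x) * fderiv ℝ v x w - v x * (G1 e (u x) * fderiv ℝ u x w))
          ((G0 e (u x) • ((fderiv ℝ (fderiv ℝ v) x).flip w) + fderiv ℝ v x w • (G1 e (u x) • fderiv ℝ u x))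
            - (v x • (G1 e (u x) • ((fderiv ℝ (fderiv ℝ u) x).flip w) + fderiv ℝ u x w • (G2 e (u x) • fderiv ℝ u x))
              + (G1 e (u x) * fderiv ℝ u x w) • fderiv ℝ v x)) x := by
        intro x hx
        have hx' := subset_closure hx
        have a1 := (hu.d1 x hx').hasFDerivAt
        have a2 := (hv.d1 x hx').hasFDerivAt
        have a3 := fderiv_apply_has (hu.d2 x hx') w
        have a4 := fderiv_apply_has (hv.d2 x hx') w
        have b0 := (G0_deriv he (u x)).comp_hasFDerivAt x a1
        have b1 := (G1_deriv he (u x)).comp_hasFDerivAt x a1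
        exact (b0.mul a4).sub (a2.mul (b1.mul a3))
      have := int_deriv_zero hΩ hK hKΩ _ _ w hder ?_ ?_
      · have e1 : ∀ x, ((G0 e (u x) • ((fderiv ℝ (fderiv ℝ v) x).flip w) + fderiv ℝ v x w • (G1 e (u x) • fderiv ℝ u x))
            - (v x • (G1 e (u x) • ((fderiv ℝ (fderiv ℝ u) x).flip w) + fderiv ℝ u x w • (G2 e (u x) • fderiv ℝ u x))
              + (G1 e (u x) * fderiv ℝ u x w) • fderiv ℝ v x)) w = G0 e (u x) * fderiv ℝ (fderiv ℝ v) x w w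
            - v x * (G2 e (u x) * (fderiv ℝ u x w)^2)
            - v x * (G1 e (u x) * fderiv ℝ (fderiv ℝ u) x w w) := by
          intro x
          simp only [sub_apply, add_apply, smul_apply,
            ContinuousLinearMap.flip_apply, smul_eq_mul]
          ring
        simp only [e1] at this
        exact this
      · intro x hx hxK
        have : u x ≤ e := by
          by_contra h
          exact hxK ⟨subset_closure hx, (not_le.1 h).le⟩
        simp [G0, G1, this]
      · have m := fun {α : Type} [TopologicalSpace α] {f : EuclideanSpace ℝ (Fin N) → α} (h : ContinuousOn f (closure Ω)) =>
          h.mono (subset_closure (s := Ω))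
        have k0 := cG0.comp_continuousOn (m hu.cont)
        have k1 := cG1.comp_continuousOn (m hu.cont)
        have k2 := cG2.comp_continuousOn (m hu.cont)
        have k3 := (m hu.c1).clm_apply (continuousOn_const (c := w))
        have k4 := (m hv.c1).clm_apply (continuousOn_const (c := w))
        have k5 := ((m hu.c2).clm_apply (continuousOn_const (c := w))).clm_apply (continuousOn_const (c := w))
        have k6 := ((m hv.c2).clm_apply (continuousOn_const (c := w))).clm_apply (continuousOn_const (c := w))
        have k7 := m hv.cont
        simp only [sub_apply, add_apply, smul_apply,
            ContinuousLinearMap.flip_apply, smul_eq_mul]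
        exact ((k0.mul k6).add (k4.mul (k1.mul k3))).sub ((k7.mul ((k1.mul k5).add (k3.mul (k2.mul k3)))).add
          ((k1.mul k3).mul k4))
    have i1 : IntegrableOn (fun x => G0 e (u x) * spaceLaplacian v x) Ω :=
      intOn hΩb ((cG0.comp_continuousOn hu.cont).mul hv.contLap)
    have i2 : IntegrableOn (fun x => v x * (G1 e (u x) * spaceLaplacian u x)) Ω :=
      intOn hΩb (hv.cont.mul ((cG1.comp_continuousOn hu.cont).mul hu.contLap))
    have hsum := integral_finsetSum (μ := volume.restrict Ω) Finset.univ (fun i _ => (main i).1)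
    rw [Finset.sum_congr rfl (fun i _ => (main i).2), Finset.sum_const_zero] at hsum
    have hle : ∫ x in Ω, ∑ i : Fin N, (
        G0 e (u x) * fderiv ℝ (fderiv ℝ v) x (EuclideanSpace.single i 1) (EuclideanSpace.single i 1)
        - v x * (G2 e (u x) * (fderiv ℝ u x (EuclideanSpace.single i 1))^2)
        - v x * (G1 e (u x) * fderiv ℝ (fderiv ℝ u) x (EuclideanSpace.single i 1) (EuclideanSpace.single i 1)))
        ≤ ∫ x in Ω, (G0 e (u x) * spaceLaplacian v x - v x * (G1 e (u x) * spaceLaplacian u x)) := by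
      refine setIntegral_mono_on (integrable_finsetSum _ fun i _ => (main i).1) (i1.sub i2) hΩ.measurableSet ?_
      intro x hx
      rw [lap_eq (hu.d2 x (subset_closure hx)), lap_eq (hv.d2 x (subset_closure hx)), Finset.mul_sum,
        Finset.mul_sum, Finset.mul_sum, ← Finset.sum_sub_distrib]
      refine Finset.sum_le_sum fun i _ => ?_
      have := mul_nonneg (hv0 x hx) (mul_nonneg (G2_nonneg he (u x)) (sq_nonneg (fderiv ℝ u x (EuclideanSpace.single i 1))))
      linarith
    rw [hsum, integral_sub i1 i2] at hle
    linarith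
  have hpos : ∀ n : ℕ, (0:ℝ) < 1/((n:ℝ)+1) := fun n => by positivity
  have cG0 : ∀ n : ℕ, Continuous (G0 (1/((n:ℝ)+1))) := fun n =>
    continuous_iff_continuousAt.2 fun s => (G0_deriv (hpos n) s).continuousAt
  have cG1 : ∀ n : ℕ, Continuous (G1 (1/((n:ℝ)+1))) := fun n =>
    continuous_iff_continuousAt.2 fun s => (G1_deriv (hpos n) s).continuousAt
  refine le_of_tendsto_of_tendsto'
    (f := fun n : ℕ => ∫ x in Ω, v x * (G1 (1/((n:ℝ)+1)) (u x) * spaceLaplacian u x))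
    (g := fun n : ℕ => ∫ x in Ω, G0 (1/((n:ℝ)+1)) (u x) * spaceLaplacian v x) (b := atTop) ?_ ?_
    (fun n => step _ (hpos n))
  · refine tendsto_integral_of_dominated_convergence (fun x => |v x * spaceLaplacian u x|) ?_ ?_ ?_ ?_
    · intro n
      exact (intOn hΩb (hv.cont.mul (((cG1 n).comp_continuousOn hu.cont).mul hu.contLap))).aestronglyMeasurable
    · exact (intOn hΩb (hv.cont.mul hu.contLap)).abs
    · intro n
      refine Eventually.of_forall fun x => ?_
      rw [norm_eq_abs, abs_mul, abs_mul, abs_mul]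
      have := G1_mem (hpos n) (u x)
      gcongr
      exact mul_le_of_le_one_left (abs_nonneg _) this
    · filter_upwards [ae_restrict_mem hΩ.measurableSet] with x hx
      rcases (hu0 x hx).eq_or_lt with h | h
      · simp [hul x hx h.symm]
      · simpa using ((G1_tendsto h).mul_const (spaceLaplacian u x)).const_mul (v x)
  · refine tendsto_integral_of_dominated_convergence (fun x => |u x * spaceLaplacian v x|) ?_ ?_ ?_ ?_
    · intro n
      exact (intOn hΩb (((cG0 n).comp_continuousOn hu.cont).mul hv.contLap)).aestronglyMeasurable
    · exact (intOn hΩb (hu.cont.mul hv.contLap)).abs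
    · intro n
      filter_upwards [ae_restrict_mem hΩ.measurableSet] with x hx
      rw [norm_eq_abs, abs_mul, abs_mul]
      have := G0_mem (hpos n) (hu0 x hx)
      rw [abs_of_nonneg (hu0 x hx)]
      gcongr
    · filter_upwards [ae_restrict_mem hΩ.measurableSet] with x hx
      exact (G0_tendsto (hu0 x hx)).mul_const _

end Part1

section Part2

open Filter Topology

lemma slice_cont {N : ℕ} {I : Set ℝ} {s : Set (EuclideanSpace ℝ (Fin N))}
    {f : ℝ × EuclideanSpace ℝ (Fin N) → ℝ} (h : ContinuousOn f (I ×ˢ s)) {t : ℝ} (ht : t ∈ I) :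
    ContinuousOn (fun x => f (t, x)) s :=
  h.comp (by fun_prop) (fun x hx => ⟨ht, hx⟩)

lemma slice_cont' {N : ℕ} {I : Set ℝ} {s : Set (EuclideanSpace ℝ (Fin N))}
    {f : ℝ × EuclideanSpace ℝ (Fin N) → ℝ} (h : ContinuousOn f (I ×ˢ s)) {x} (hx : x ∈ s) :
    ContinuousOn (fun t => f (t, x)) I :=
  h.comp (by fun_prop) (fun t ht => ⟨ht, hx⟩)

lemma finite_restrict {N : ℕ} {Ω : Set (EuclideanSpace ℝ (Fin N))} (hΩb : Bornology.IsBounded Ω) :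
    IsFiniteMeasure (volume.restrict Ω) :=
  ⟨by rw [Measure.restrict_apply_univ]; exact hΩb.measure_lt_top⟩

lemma cont_param {N : ℕ} {Ω Ω' : Set (EuclideanSpace ℝ (Fin N))} (hΩ : IsOpen Ω')
    (hΩb : Bornology.IsBounded Ω) (hsub : Ω' ⊆ Ω) {a b : ℝ}
    {f : ℝ × EuclideanSpace ℝ (Fin N) → ℝ} (h : ContinuousOn f (Icc a b ×ˢ closure Ω)) :
    ContinuousOn (fun t => ∫ x in Ω', f (t, x)) (Icc a b) := by
  have hb' : Bornology.IsBounded Ω' := hΩb.subset hsub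
  have := finite_restrict hb'
  obtain ⟨C, hC⟩ := (isCompact_Icc.prod hΩb.isCompact_closure).exists_bound_of_continuousOn h
  refine continuousOn_of_dominated (bound := fun _ => C) ?_ ?_ (integrable_const C) ?_
  · intro t ht
    exact (intOn hb' ((slice_cont h ht).mono (closure_mono hsub))).aestronglyMeasurable
  · intro t ht
    filter_upwards [ae_restrict_mem hΩ.measurableSet] with x hx
    exact hC (t, x) ⟨ht, subset_closure (hsub hx)⟩
  · filter_upwards [ae_restrict_mem hΩ.measurableSet] with x hx
    exact slice_cont' h (subset_closure (hsub hx))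

lemma deriv_param {N : ℕ} {Ω : Set (EuclideanSpace ℝ (Fin N))} (hΩ : IsOpen Ω)
    (hΩb : Bornology.IsBounded Ω) {a b : ℝ} {f f' : ℝ × EuclideanSpace ℝ (Fin N) → ℝ}
    (hf : ContinuousOn f (Ioo a b ×ˢ closure Ω)) (hf' : ContinuousOn f' (Ioo a b ×ˢ closure Ω))
    (hd : ∀ t ∈ Ioo a b, ∀ x ∈ closure Ω, HasDerivAt (fun τ => f (τ, x)) (f' (t, x)) t)
    {t : ℝ} (ht : t ∈ Ioo a b) :
    HasDerivAt (fun τ => ∫ x in Ω, f (τ, x)) (∫ x in Ω, f' (t, x)) t := by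
  have := finite_restrict hΩb
  obtain ⟨c, hc1, hc2⟩ := exists_between ht.1
  obtain ⟨d, hd1, hd2⟩ := exists_between ht.2
  have hsub : Icc c d ⊆ Ioo a b := fun y hy => ⟨hc1.trans_le hy.1, hy.2.trans_lt hd2⟩
  obtain ⟨C, hC⟩ := (isCompact_Icc.prod hΩb.isCompact_closure).exists_bound_of_continuousOn
    (hf'.mono (prod_mono hsub le_rfl))
  refine (hasDerivAt_integral_of_dominated_loc_of_deriv_le (bound := fun _ => C)
    (F := fun τ x => f (τ, x)) (F' := fun τ x => f' (τ, x)) (Icc_mem_nhds hc2 hd1) ?_ ?_ ?_ ?_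
    (integrable_const C) ?_).2
  · filter_upwards [Ioo_mem_nhds ht.1 ht.2] with τ hτ
    exact (intOn hΩb (slice_cont hf hτ)).aestronglyMeasurable
  · exact intOn hΩb (slice_cont hf ht)
  · exact (intOn hΩb (slice_cont hf' ht)).aestronglyMeasurable
  · filter_upwards [ae_restrict_mem hΩ.measurableSet] with x hx τ hτ
    exact hC (τ, x) ⟨hτ, subset_closure hx⟩
  · filter_upwards [ae_restrict_mem hΩ.measurableSet] with x hx τ hτ
    exact hd τ (hsub hτ) x (subset_closure hx)

noncomputable def gsq {N : ℕ} (h : EuclideanSpace ℝ (Fin N) → ℝ) (x : EuclideanSpace ℝ (Fin N)) : ℝ :=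
  ∑ i : Fin N, (fderiv ℝ h x (EuclideanSpace.single i 1))^2

lemma lap_exp {N : ℕ} {h : EuclideanSpace ℝ (Fin N) → ℝ} (hh : ContDiff ℝ 2 h) (c S d : ℝ)
    (x : EuclideanSpace ℝ (Fin N)) :
    spaceLaplacian (fun y => c * exp (S * h y) + d) x =
      c * exp (S * h x) * (S * spaceLaplacian h x + S^2 * gsq h x) := by
  have h2 : C2On univ h := C2On.of_contDiff hh
  have d1 : ∀ y, HasFDerivAt (fun y => c * exp (S * h y) + d)
      ((c * exp (S * h y) * S) • fderiv ℝ h y) y := by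
    intro y
    have := (((h2.d1 y trivial).hasFDerivAt.const_mul S).exp.const_mul c).add_const d
    convert! this using 1
    simp only [smul_smul]
    congr 1; ring
  have e1 : ∀ v, (fun y => fderiv ℝ (fun y => c * exp (S * h y) + d) y v) =
      fun y => (c * exp (S * h y) * S) * fderiv ℝ h y v := by
    intro v; funext y; rw [(d1 y).fderiv]; rfl
  rw [lap_eq (h2.d2 x trivial)]
  unfold spaceLaplacian gsq
  rw [Finset.mul_sum, Finset.mul_sum, ← Finset.sum_add_distrib, Finset.mul_sum]
  refine Finset.sum_congr rfl fun i _ => ?_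
  rw [e1]
  have a1 := (((h2.d1 x trivial).hasFDerivAt.const_mul S).exp.const_mul c).mul_const S
  have a2 := a1.fun_mul (fderiv_apply_has (h2.d2 x trivial) (EuclideanSpace.single i 1))
  rw [a2.fderiv]
  simp only [add_apply, smul_apply, ContinuousLinearMap.flip_apply, smul_eq_mul]
  ring

lemma c2_exp {N : ℕ} {h : EuclideanSpace ℝ (Fin N) → ℝ} (hh : ContDiff ℝ 2 h) (c S d : ℝ)
    (s : Set (EuclideanSpace ℝ (Fin N))) : C2On s (fun y => c * exp (S * h y) + d) := 
  C2On.of_contDiff (by fun_prop)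

lemma sqd_contDiff {N : ℕ} (x₀ : EuclideanSpace ℝ (Fin N)) :
    ContDiff ℝ 2 (fun x : EuclideanSpace ℝ (Fin N) => ‖x - x₀‖^2) :=
  (contDiff_id.sub contDiff_const).norm_sq ℝ

lemma sqd_fderiv {N : ℕ} (x₀ x v : EuclideanSpace ℝ (Fin N)) :
    fderiv ℝ (fun x : EuclideanSpace ℝ (Fin N) => ‖x - x₀‖^2) x v = 2 * ⟪x - x₀, v⟫ := by
  have := ((hasFDerivAt_id x).sub_const x₀).norm_sq
  simp only [id] at this
  rw [this.fderiv]
  simp [inner_sub_left]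

lemma sqd_lap {N : ℕ} (x₀ x : EuclideanSpace ℝ (Fin N)) :
    spaceLaplacian (fun x : EuclideanSpace ℝ (Fin N) => ‖x - x₀‖^2) x = 2 * N := by
  unfold spaceLaplacian
  have : ∀ i : Fin N, fderiv ℝ (fun y => fderiv ℝ (fun x : EuclideanSpace ℝ (Fin N) => ‖x - x₀‖^2) y
      (EuclideanSpace.single i 1)) x (EuclideanSpace.single i 1) = 2 := by
    intro i
    have e : (fun y => fderiv ℝ (fun x : EuclideanSpace ℝ (Fin N) => ‖x - x₀‖^2) y
      (EuclideanSpace.single i 1)) = fun y => 2 * ⟪y - x₀, EuclideanSpace.single i 1⟫ := by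
      funext y; exact sqd_fderiv _ _ _
    rw [e]
    have := ((((hasFDerivAt_id x).sub_const x₀).inner ℝ
      (hasFDerivAt_const (EuclideanSpace.single i (1:ℝ)) x))).const_mul 2
    simp only [id] at this
    rw [this.fderiv]
    simp
  simp [this, mul_comm]

lemma sqd_gsq {N : ℕ} (x₀ x : EuclideanSpace ℝ (Fin N)) :
    gsq (fun x : EuclideanSpace ℝ (Fin N) => ‖x - x₀‖^2) x = 4 * ‖x - x₀‖^2 := by
  unfold gsq
  rw [EuclideanSpace.norm_sq_eq, Finset.mul_sum]
  refine Finset.sum_congr rfl fun i _ => ?_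
  rw [sqd_fderiv, EuclideanSpace.inner_single_right]
  simp
  ring

lemma gsq_pos {N : ℕ} {h : EuclideanSpace ℝ (Fin N) → ℝ} {x : EuclideanSpace ℝ (Fin N)}
    (hg : 0 < ‖gradient h x‖) : 0 < gsq h x := by
  have : gsq h x = ‖gradient h x‖^2 := by
    unfold gsq
    rw [EuclideanSpace.norm_sq_eq]
    refine Finset.sum_congr rfl fun i _ => ?_
    have : ⟪gradient h x, EuclideanSpace.single i (1:ℝ)⟫ = fderiv ℝ h x (EuclideanSpace.single i 1) := by
      simp [gradient]
    rw [← this, EuclideanSpace.inner_single_right]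
    simp
  rw [this]; positivity

lemma gsq_cont {N : ℕ} {h : EuclideanSpace ℝ (Fin N) → ℝ} (hh : ContDiff ℝ 2 h) : Continuous (gsq h) := by
  have := hh.continuous_fderiv (by norm_num)
  unfold gsq
  fun_prop

end Part2

section Part3

open Filter Topology

structure Sol {N : ℕ} (Ω : Set (EuclideanSpace ℝ (Fin N))) (T A : ℝ)
    (q qt : ℝ × EuclideanSpace ℝ (Fin N) → ℝ) : Prop where
  hΩ : IsOpen Ω
  hΩb : Bornology.IsBounded Ω
  cont : ContinuousOn q (Icc 0 T ×ˢ closure Ω)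
  nonneg : ∀ p ∈ Icc 0 T ×ˢ closure Ω, 0 ≤ q p
  der : ∀ p ∈ Ioo 0 T ×ˢ closure Ω, HasDerivAt (fun τ => q (τ, p.2)) (qt p) p.1
  contqt : ContinuousOn qt (Ioo 0 T ×ˢ closure Ω)
  c2 : ∀ t ∈ Ioo 0 T, C2On (closure Ω) (fun z => q (t, z))
  ineq : ∀ t ∈ Ioo 0 T, ∀ x ∈ Ω, |qt (t, x) + spaceLaplacian (fun z => q (t, z)) x| ≤ A * q (t, x)
  bd : ∀ t ∈ Ioo 0 T, ∀ x ∈ frontier Ω, q (t, x) = 0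

variable {N : ℕ} {Ω : Set (EuclideanSpace ℝ (Fin N))} {T A : ℝ}
    {q qt : ℝ × EuclideanSpace ℝ (Fin N) → ℝ}

lemma Sol.evol (h : Sol Ω T A q qt) {ψ ψt : ℝ × EuclideanSpace ℝ (Fin N) → ℝ}
    (h1 : ContinuousOn ψ (Ioo 0 T ×ˢ closure Ω)) (h2 : ContinuousOn ψt (Ioo 0 T ×ˢ closure Ω))
    (hd : ∀ t ∈ Ioo 0 T, ∀ x ∈ closure Ω, HasDerivAt (fun τ => ψ (τ, x)) (ψt (t, x)) t)
    {t : ℝ} (ht : t ∈ Ioo 0 T) :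
    HasDerivAt (fun τ => ∫ x in Ω, ψ (τ, x) * q (τ, x))
      (∫ x in Ω, (ψt (t, x) * q (t, x) + ψ (t, x) * qt (t, x))) t := by
  have hq := h.cont.mono (prod_mono (Ioo_subset_Icc_self (a := (0:ℝ)) (b := T)) (le_refl (closure Ω)))
  refine deriv_param h.hΩ h.hΩb (f := fun p => ψ p * q p)
    (f' := fun p => ψt p * q p + ψ p * qt p) (h1.mul hq) ((h2.mul hq).add (h1.mul h.contqt)) ?_ ht
  intro t ht x hx
  exact (hd t ht x hx).mul (h.der (t, x) ⟨ht, hx⟩)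

lemma Sol.lap_zero (h : Sol Ω T A q qt) {t : ℝ} (ht : t ∈ Ioo 0 T) {x} (hx : x ∈ Ω)
    (h0 : q (t, x) = 0) : spaceLaplacian (fun z => q (t, z)) x = 0 := by
  have h1 := h.ineq t ht x hx
  have h2 : qt (t, x) = 0 := by
    refine IsLocalMin.hasDerivAt_eq_zero ?_ (h.der (t, x) ⟨ht, subset_closure hx⟩)
    filter_upwards [Ioo_mem_nhds ht.1 ht.2] with s hs
    simp only [h0]
    exact h.nonneg (s, x) ⟨Ioo_subset_Icc_self hs, subset_closure hx⟩
  rw [h0, h2, mul_zero, zero_add] at h1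
  exact abs_nonpos_iff.1 h1

lemma Sol.smoothing_aux (h : Sol Ω T A q qt) (x₀ : EuclideanSpace ℝ (Fin N)) {t r : ℝ}
    (ht : t ∈ Ioo 0 T) (hr : 0 < r) :
    ∫ x in Ω, exp (- (N/2) * log r) * exp (-(1/(4*r)) * ‖x - x₀‖^2) * q (0, x) ≤
      exp (A * t + N/(2*t)) * ∫ x in Ω, q (t, x) := by
  set ψ : ℝ × EuclideanSpace ℝ (Fin N) → ℝ := fun p =>
    exp (A * p.1 - N/2 * log (p.1 + r)) * exp (-(1/(4*(p.1+r))) * ‖p.2 - x₀‖^2) with hψ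
  set ψt : ℝ × EuclideanSpace ℝ (Fin N) → ℝ := fun p =>
    ψ p * (A - N/(2*(p.1+r)) + ‖p.2 - x₀‖^2/(4*(p.1+r)^2)) with hψt
  have hne : ∀ p ∈ Icc 0 T ×ˢ closure Ω, p.1 + r ≠ 0 := by
    intro p hp; have := hp.1.1; positivity
  have cψ : ContinuousOn ψ (Icc 0 T ×ˢ closure Ω) := by
    have e1 : ContinuousOn (fun p : ℝ × EuclideanSpace ℝ (Fin N) => log (p.1 + r)) (Icc 0 T ×ˢ closure Ω) :=
      ContinuousOn.log (by fun_prop) hne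
    have e2 : ContinuousOn (fun p : ℝ × EuclideanSpace ℝ (Fin N) => 1/(4*(p.1 + r))) (Icc 0 T ×ˢ closure Ω) :=
      ContinuousOn.div (by fun_prop) (by fun_prop) (fun p hp => mul_ne_zero four_ne_zero (hne p hp))
    have e3 : ContinuousOn (fun p : ℝ × EuclideanSpace ℝ (Fin N) => A * p.1 - N/2 * log (p.1 + r)) (Icc 0 T ×ˢ closure Ω) :=
      ContinuousOn.sub (by fun_prop) (e1.const_mul _)
    have e4 : ContinuousOn (fun p : ℝ × EuclideanSpace ℝ (Fin N) => -(1/(4*(p.1+r))) * ‖p.2 - x₀‖^2) (Icc 0 T ×ˢ closure Ω) :=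
      e2.neg.mul (by fun_prop)
    exact e3.rexp.mul e4.rexp
  have cψt : ContinuousOn ψt (Icc 0 T ×ˢ closure Ω) := by
    refine cψ.mul (ContinuousOn.add (ContinuousOn.sub continuousOn_const ?_) ?_)
    · exact ContinuousOn.div (by fun_prop) (by fun_prop) (fun p hp => mul_ne_zero two_ne_zero (hne p hp))
    · exact ContinuousOn.div (by fun_prop) (by fun_prop)
        (fun p hp => mul_ne_zero four_ne_zero (pow_ne_zero 2 (hne p hp)))
  have hd : ∀ t ∈ Ioo 0 T, ∀ x ∈ closure Ω, HasDerivAt (fun τ => ψ (τ, x)) (ψt (t, x)) t := by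
    intro t ht x hx
    have hp : t + r ≠ 0 := hne (t, x) ⟨Ioo_subset_Icc_self ht, hx⟩
    have a0 : HasDerivAt (fun τ : ℝ => τ + r) 1 t := (hasDerivAt_id t).add_const r
    have a1 : HasDerivAt (fun τ : ℝ => A * τ) A t := by simpa using (hasDerivAt_id t).const_mul A
    have a2 := (a1.fun_sub ((a0.log hp).const_mul ((N:ℝ)/2))).exp
    have a3 := ((((a0.const_mul 4).inv (mul_ne_zero four_ne_zero hp)).fun_neg).mul_const (‖x - x₀‖^2)).exp
    have a4 := a2.fun_mul a3
    simp only [hψt, hψ, one_div]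
    convert! a4 using 1
    simp only [Pi.inv_apply]
    field_simp
  have lapψ : ∀ t ∈ Ioo 0 T, ∀ x, ψt (t, x) = A * ψ (t, x) + spaceLaplacian (fun z => ψ (t, z)) x := by
    intro t ht x
    have hp : t + r ≠ 0 := by have := ht.1; positivity
    have := lap_exp (sqd_contDiff x₀) (exp (A * t - N/2 * log (t + r))) (-(1/(4*(t+r)))) 0 x
    simp only [add_zero, sqd_lap, sqd_gsq] at this
    simp only [hψt, hψ]
    rw [this]
    field_simp
    ring
  have c2ψ : ∀ t, C2On (closure Ω) (fun z => ψ (t, z)) := by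
    intro t
    have := c2_exp (sqd_contDiff x₀) (exp (A * t - N/2 * log (t + r))) (-(1/(4*(t+r)))) 0 (closure Ω)
    simpa only [add_zero] using this
  have sub1 : Ioo 0 T ×ˢ closure Ω ⊆ Icc 0 T ×ˢ closure Ω := prod_mono Ioo_subset_Icc_self le_rfl
  have hD := fun t ht => h.evol (t := t) (cψ.mono sub1) (cψt.mono sub1) hd ht
  have hmono : MonotoneOn (fun τ => ∫ x in Ω, ψ (τ, x) * q (τ, x)) (Icc 0 T) := by
    refine monotoneOn_of_deriv_nonneg (convex_Icc _ _) ?_ ?_ ?_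
    · exact cont_param h.hΩ h.hΩb le_rfl (f := fun p => ψ p * q p) (cψ.mul h.cont)
    · rw [interior_Icc]
      exact fun t ht => (hD t ht).differentiableAt.differentiableWithinAt
    · rw [interior_Icc]
      intro t ht
      rw [(hD t ht).deriv]
      have ht' := Ioo_subset_Icc_self ht
      have g := green_le h.hΩ h.hΩb (h.c2 t ht) (c2ψ t)
        (fun x hx => h.nonneg (t, x) ⟨ht', subset_closure hx⟩) (fun x hx => by positivity) (h.bd t ht)
        (fun x hx h0 => h.lap_zero ht hx h0)
      have i1 : IntegrableOn (fun x => ψ (t, x) * spaceLaplacian (fun z => q (t, z)) x) Ω := intOn h.hΩb ((c2ψ t).cont.mul (h.c2 t ht).contLap)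
      have i2 : IntegrableOn (fun x => q (t, x) * spaceLaplacian (fun z => ψ (t, z)) x) Ω := intOn h.hΩb ((h.c2 t ht).cont.mul (c2ψ t).contLap)
      have i3 : IntegrableOn (fun x => ψt (t, x) * q (t, x) + ψ (t, x) * qt (t, x)) Ω :=
        intOn h.hΩb (((slice_cont cψt ht').mul (slice_cont h.cont ht')).add
          ((slice_cont cψ ht').mul (slice_cont h.contqt ht)))
      have := setIntegral_mono_on (i2.sub i1) i3 h.hΩ.measurableSet (fun x hx => by
        have h1 := (abs_le.1 (h.ineq t ht x hx)).1
        have h2 : 0 ≤ ψ (t, x) := by positivity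
        have h3 := mul_le_mul_of_nonneg_left h1 h2
        simp only [Pi.sub_apply, lapψ t ht x]
        nlinarith)
      simp only [Pi.sub_apply] at this
      rw [integral_sub i2 i1] at this
      linarith
  have hT : 0 < T := ht.1.trans ht.2
  have hm := hmono (left_mem_Icc.2 hT.le) (Ioo_subset_Icc_self ht) ht.1.le
  have ht' := Ioo_subset_Icc_self ht
  have hR : ∫ x in Ω, ψ (t, x) * q (t, x) ≤ exp (A * t + N/(2*t)) * ∫ x in Ω, q (t, x) := by
    rw [← integral_const_mul]
    refine setIntegral_mono_on (intOn h.hΩb ((c2ψ t).cont.mul (h.c2 t ht).cont))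
      (intOn h.hΩb ((h.c2 t ht).cont.const_mul _)) h.hΩ.measurableSet (fun x hx => ?_)
    refine mul_le_mul_of_nonneg_right ?_ (h.nonneg (t, x) ⟨ht', subset_closure hx⟩)
    have htp := ht.1
    simp only [hψ]
    rw [← exp_add, exp_le_exp]
    have l1 : log t ≤ log (t + r) := log_le_log htp (by linarith)
    have l2 : - log t ≤ 1/t := by
      rw [← log_inv, one_div]
      linarith [log_le_sub_one_of_pos (inv_pos.2 htp)]
    have l3 : 0 ≤ 1/(4*(t+r)) * ‖x - x₀‖^2 := by positivity
    have l4 : (N:ℝ)/2 * (-log (t + r)) ≤ N/2 * (1/t) := by gcongr; linarith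
    have l5 : (N:ℝ)/2 * (1/t) = N/(2*t) := by field_simp
    linarith
  refine le_trans (le_of_eq ?_) (hm.trans hR)
  simp only [hψ, mul_zero, zero_add, zero_sub, neg_mul]

lemma Sol.smoothing (h : Sol Ω T A q qt) (hN : 1 ≤ N) {x₀ : EuclideanSpace ℝ (Fin N)} (hx₀ : x₀ ∈ Ω)
    {t : ℝ} (ht : t ∈ Ioo 0 T) :
    q (0, x₀) * (exp (-(1/4)) * (volume (Metric.ball (0 : EuclideanSpace ℝ (Fin N)) 1)).toReal) ≤
      exp (A * t + N/(2*t)) * ∫ x in Ω, q (t, x) := by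
  have : Nonempty (Fin N) := ⟨⟨0, hN⟩⟩
  set c := exp (-(1/4)) * (volume (Metric.ball (0 : EuclideanSpace ℝ (Fin N)) 1)).toReal with hc
  have hc0 : 0 ≤ c := by positivity
  have hT : 0 < T := ht.1.trans ht.2
  have h0T : (0:ℝ) ∈ Icc 0 T := left_mem_Icc.2 hT.le
  have key : ∀ e > 0, (q (0, x₀) - e) * c ≤ exp (A * t + N/(2*t)) * ∫ x in Ω, q (t, x) := by
    intro e he
    have hcq := slice_cont h.cont h0T
    have hcat : ContinuousAt (fun x => q (0, x)) x₀ :=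
      hcq.continuousAt (mem_of_superset (h.hΩ.mem_nhds hx₀) subset_closure)
    have hev : ∀ᶠ x in 𝓝 x₀, q (0, x₀) - e < q (0, x) ∧ x ∈ Ω :=
      (hcat.eventually (lt_mem_nhds (by linarith))).and (h.hΩ.mem_nhds hx₀)
    obtain ⟨ρ, hρ, hball⟩ := Metric.eventually_nhds_iff_ball.1 hev
    have hsub : Metric.ball x₀ ρ ⊆ Ω := fun x hx => (hball x hx).2
    refine le_trans ?_ (h.smoothing_aux x₀ ht (r := ρ^2) (by positivity))
    have hcI : ContinuousOn (fun x => exp (- (N/2) * log (ρ^2)) * exp (-(1/(4*ρ^2)) * ‖x - x₀‖^2) * q (0, x)) (closure Ω) :=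
      ContinuousOn.mul (by fun_prop) hcq
    have hI := intOn h.hΩb hcI
    refine le_trans ?_ (setIntegral_mono_set hI ?_ (ae_of_all _ hsub))
    · have hIb := hI.mono_set hsub
      have hconst : ∫ x in Metric.ball x₀ ρ, (ρ^N)⁻¹ * exp (-(1/4)) * (q (0, x₀) - e) = (q (0, x₀) - e) * c := by
        rw [setIntegral_const, measureReal_def, Measure.addHaar_ball _ _ hρ.le, ENNReal.toReal_mul,
          ENNReal.toReal_ofReal (by positivity), hc]
        simp only [finrank_euclideanSpace, Fintype.card_fin, smul_eq_mul]
        have : ρ^N ≠ 0 := by positivity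
        field_simp
      rw [← hconst]
      refine setIntegral_mono_on ?_ hIb measurableSet_ball ?_
      · exact integrableOn_const (by exact measure_ball_lt_top.ne)
      · intro x hx
        have hq0 : 0 ≤ q (0, x) := h.nonneg (0, x) ⟨h0T, subset_closure (hsub hx)⟩
        have e1 : exp (- ((N:ℝ)/2) * log (ρ^2)) = (ρ^N)⁻¹ := by
          rw [log_pow]
          have : -((N:ℝ)/2) * ((2:ℕ) * log ρ) = -(N * log ρ) := by push_cast; ring
          rw [this, exp_neg, ← log_pow, exp_log (by positivity)]
        rw [e1]
        have e2 : exp (-(1/4)) ≤ exp (-(1/(4*ρ^2)) * ‖x - x₀‖^2) := by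
          rw [exp_le_exp]
          have : ‖x - x₀‖ ≤ ρ := by rw [← dist_eq_norm]; exact (Metric.mem_ball.1 hx).le
          have : ‖x - x₀‖^2 ≤ ρ^2 := by gcongr
          have h4 : 1/(4*ρ^2) * ‖x - x₀‖^2 ≤ 1/(4*ρ^2) * ρ^2 := by gcongr
          have h5 : 1/(4*ρ^2) * ρ^2 = 1/4 := by field_simp
          linarith
        calc (ρ^N)⁻¹ * exp (-(1/4)) * (q (0, x₀) - e) ≤ (ρ^N)⁻¹ * exp (-(1/4)) * q (0, x) := by
              gcongr; exact (hball x hx).1.le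
          _ ≤ _ := by gcongr
    · filter_upwards [ae_restrict_mem h.hΩ.measurableSet] with x hx
      have hq0 : 0 ≤ q (0, x) := h.nonneg (0, x) ⟨h0T, subset_closure hx⟩
      simp only [Pi.zero_apply]
      positivity
  refine le_of_forall_pos_le_add fun e he => ?_
  have h1 := key (e / (c + 1)) (by positivity)
  have h2 : e / (c + 1) * c ≤ e := by
    rw [div_mul_eq_mul_div, div_le_iff₀ (by positivity)]; nlinarith
  linarith [sub_mul (q (0, x₀)) (e/(c+1)) c]

end Part3

section Part4

open Filter Topology

structure Wt {N : ℕ} (Ω ω₀ ω : Set (EuclideanSpace ℝ (Fin N))) (η : EuclideanSpace ℝ (Fin N) → ℝ)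
    (K c D s₁ : ℝ) : Prop where
  hωo : IsOpen ω
  hω₀ω : ω₀ ⊆ ω
  hωΩ : ω ⊆ Ω
  hη : ContDiff ℝ 2 η
  pos : ∀ x ∈ Ω, 0 < η x
  bd : ∀ x ∈ frontier Ω, η x = 0
  hK : ∀ x ∈ Ω, η x ≤ K - 1
  hK1 : 1 ≤ K
  hD : ∀ x ∈ Ω, |spaceLaplacian η x| ≤ D
  hc : 0 < c
  hD0 : 0 ≤ D
  hg : ∀ x ∈ Ω, x ∉ ω₀ → c ≤ gsq η x
  hs : 1 ≤ s₁
  hsc : K + D + 1 ≤ s₁ * (c / 2)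

variable {N : ℕ} {Ω ω₀ ω : Set (EuclideanSpace ℝ (Fin N))} {T A : ℝ}
    {q qt : ℝ × EuclideanSpace ℝ (Fin N) → ℝ} {η : EuclideanSpace ℝ (Fin N) → ℝ} {K c D s₁ : ℝ}

noncomputable def phi (η : EuclideanSpace ℝ (Fin N) → ℝ) (K s : ℝ) (p : ℝ × EuclideanSpace ℝ (Fin N)) : ℝ :=
  exp (-(s/p.1) * K) * exp (s/p.1 * η p.2) + -exp (-(s/p.1) * K)

noncomputable def phit (η : EuclideanSpace ℝ (Fin N) → ℝ) (K s : ℝ) (p : ℝ × EuclideanSpace ℝ (Fin N)) : ℝ :=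
  s/p.1^2 * ((K - η p.2) * (exp (-(s/p.1) * K) * exp (s/p.1 * η p.2)) - K * exp (-(s/p.1) * K))

lemma phi_cont (hη : ContDiff ℝ 2 η) (s : ℝ) : ContinuousOn (phi η K s) (Ioi 0 ×ˢ closure Ω) := by
  have h0 : ContinuousOn (fun p : ℝ × EuclideanSpace ℝ (Fin N) => s/p.1) (Ioi 0 ×ˢ closure Ω) :=
    ContinuousOn.div (by fun_prop) (by fun_prop) (fun p hp => (ne_of_gt hp.1))
  have h1 : ContinuousOn (fun p : ℝ × EuclideanSpace ℝ (Fin N) => η p.2) (Ioi 0 ×ˢ closure Ω) :=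
    (hη.continuous.comp continuous_snd).continuousOn
  have h2 := (h0.neg.mul_const K).rexp
  exact (h2.mul (h0.mul h1).rexp).add h2.neg

lemma phit_cont (hη : ContDiff ℝ 2 η) (s : ℝ) : ContinuousOn (phit η K s) (Ioi 0 ×ˢ closure Ω) := by
  have h0 : ContinuousOn (fun p : ℝ × EuclideanSpace ℝ (Fin N) => s/p.1) (Ioi 0 ×ˢ closure Ω) :=
    ContinuousOn.div (by fun_prop) (by fun_prop) (fun p hp => (ne_of_gt hp.1))
  have h00 : ContinuousOn (fun p : ℝ × EuclideanSpace ℝ (Fin N) => s/p.1^2) (Ioi 0 ×ˢ closure Ω) :=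
    ContinuousOn.div (by fun_prop) (by fun_prop) (fun p hp => pow_ne_zero 2 (ne_of_gt hp.1))
  have h1 : ContinuousOn (fun p : ℝ × EuclideanSpace ℝ (Fin N) => η p.2) (Ioi 0 ×ˢ closure Ω) :=
    (hη.continuous.comp continuous_snd).continuousOn
  have h2 := (h0.neg.mul_const K).rexp
  exact h00.mul (((continuousOn_const.sub h1).mul (h2.mul (h0.mul h1).rexp)).sub (h2.const_mul K))

lemma phi_deriv (s : ℝ) {t : ℝ} (ht : 0 < t) (x : EuclideanSpace ℝ (Fin N)) :
    HasDerivAt (fun τ => phi η K s (τ, x)) (phit η K s (t, x)) t := by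
  have a0 : HasDerivAt (fun τ : ℝ => s/τ) (-(s/t^2)) t := by
    have := (hasDerivAt_inv ht.ne').const_mul s
    simp only [div_eq_mul_inv]
    convert! this using 1
    ring
  have a1 := (a0.fun_neg.mul_const K).exp
  have a2 := (a1.fun_mul (a0.mul_const (η x)).exp).fun_add a1.fun_neg
  unfold phi phit
  convert! a2 using 1
  ring

lemma phi_lap (hη : ContDiff ℝ 2 η) (s t : ℝ) (x : EuclideanSpace ℝ (Fin N)) :
    spaceLaplacian (fun z => phi η K s (t, z)) x =
      exp (-(s/t) * K) * exp (s/t * η x) * (s/t * spaceLaplacian η x + (s/t)^2 * gsq η x) :=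
  lap_exp hη (exp (-(s/t) * K)) (s/t) (-exp (-(s/t) * K)) x

lemma phi_c2 (hη : ContDiff ℝ 2 η) (s t : ℝ) : C2On (closure Ω) (fun z => phi η K s (t, z)) :=
  c2_exp hη (exp (-(s/t) * K)) (s/t) (-exp (-(s/t) * K)) _

lemma phi_pos {s t : ℝ} (hs : 0 < s) (ht : 0 < t) {x} (hx : 0 < η x) : 0 < phi η K s (t, x) := by
  unfold phi
  have h1 : 1 < exp (s/t * η x) := by rw [one_lt_exp_iff]; positivity
  have h2 := exp_pos (-(s/t) * K)
  simp only
  nlinarith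

lemma Wt.pointwise (W : Wt Ω ω₀ ω η K c D s₁) {s t : ℝ} (ht : 0 < t) (hA : 0 ≤ A) (h1 : s₁ ≤ s)
    (h2 : s₁ ≤ s/t) (h3 : s₁ * √A ≤ s/t) {x} (hx : x ∈ Ω) :
    phit η K s (t, x) + A * phi η K s (t, x) - spaceLaplacian (fun z => phi η K s (t, z)) x ≤
      -(c/2) * exp (-(s/t) * K) + ω.indicator (fun _ => 2 * c) x := by
  rw [phi_lap W.hη]
  unfold phit phi
  have hs1 := W.hs
  have hs : 0 < s := by linarith
  have e1 : s/t^2 = (s/t)^2/s := by field_simp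
  simp only [e1]
  set S := s/t with hS
  have hS0 : 0 < S := by positivity
  set e := exp (-S * K) with he
  set w := e * exp (S * η x) with hw
  have hK0 := W.hK1
  have hηx := W.pos x hx
  have he0 : 0 < e := exp_pos _
  have he1 : e ≤ 1 := by rw [he, exp_le_one_iff]; nlinarith
  have hew : e ≤ w := by
    have : 1 ≤ exp (S * η x) := by rw [one_le_exp_iff]; positivity
    rw [hw]; nlinarith
  have hw0 : 0 < w := by linarith
  have hwS : w * S^2 ≤ 2 := by
    have a1 : w ≤ exp (-S) := by
      rw [hw, he, ← exp_add, exp_le_exp]; nlinarith [W.hK x hx]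
    have a2 := quadratic_le_exp_of_nonneg hS0.le
    calc w * S^2 ≤ exp (-S) * (2 * exp S) := by gcongr; linarith
      _ = 2 := by rw [mul_left_comm, ← exp_add]; simp
  have b1 : S^2/s * ((K - η x) * w - K * e) ≤ w * S^2 * (K/s₁) := by
    calc S^2/s * ((K - η x) * w - K * e) ≤ S^2/s * (K * w) := by
          gcongr; nlinarith
      _ ≤ S^2/s₁ * (K * w) := by gcongr
      _ = _ := by ring
  have b2 : A * (w + -e) ≤ w * S^2 * (1/s₁) := by
    have k1 : s₁ * A ≤ S^2 := by
      have : (s₁ * √A)^2 ≤ S^2 := by gcongr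
      rw [mul_pow, sq_sqrt hA] at this
      nlinarith [mul_nonneg (sub_nonneg.2 hs1) hA]
    have k2 : A ≤ S^2 * (1/s₁) := by rw [mul_one_div, le_div_iff₀ (by linarith)]; linarith
    calc A * (w + -e) ≤ A * w := by gcongr; linarith
      _ ≤ (S^2 * (1/s₁)) * w := by gcongr
      _ = _ := by ring
  have b3 : -(w * (S * spaceLaplacian η x)) ≤ w * S^2 * (D/s₁) := by
    have k1 := (abs_le.1 (W.hD x hx)).1
    have k3 := W.hD0
    have k2 : S * D ≤ S^2 * (D/s₁) := by
      rw [mul_div_assoc', le_div_iff₀ (by linarith)]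
      have := mul_le_mul_of_nonneg_left h2 (mul_nonneg hS0.le k3)
      nlinarith
    calc -(w * (S * spaceLaplacian η x)) = w * (S * (-spaceLaplacian η x)) := by ring
      _ ≤ w * (S * D) := by gcongr; linarith
      _ ≤ w * (S^2 * (D/s₁)) := by gcongr
      _ = _ := by ring
  have b4 : w * S^2 * ((K + D + 1)/s₁) ≤ w * S^2 * (c/2) := by
    refine mul_le_mul_of_nonneg_left ?_ (by positivity)
    rw [div_le_iff₀ (by linarith)]; linarith [W.hsc]
  have b5 : w * S^2 * (K/s₁) + w * S^2 * (1/s₁) + w * S^2 * (D/s₁) = w * S^2 * ((K + D + 1)/s₁) := by ring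
  have b6 : w * (S * spaceLaplacian η x + S^2 * gsq η x) = w * (S * spaceLaplacian η x) + w * S^2 * gsq η x := by ring
  rw [b6]
  have hc := W.hc
  by_cases hx0 : x ∈ ω₀
  · rw [indicator_of_mem (W.hω₀ω hx0)]
    have g0 : 0 ≤ gsq η x := Finset.sum_nonneg fun i _ => sq_nonneg _
    have g1 : 0 ≤ w * S^2 * gsq η x := by positivity
    nlinarith
  · have g1 : w * S^2 * c ≤ w * S^2 * gsq η x := by
      gcongr; exact W.hg x hx hx0
    have g2 : 0 ≤ ω.indicator (fun _ => 2 * c) x := indicator_nonneg (fun _ _ => by positivity) x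
    have g3 : e ≤ w * S^2 := by
      have : 1 ≤ S^2 := one_le_pow₀ (by linarith)
      nlinarith
    nlinarith

lemma carleman (h : Sol Ω T A q qt) (W : Wt Ω ω₀ ω η K c D s₁) {s t : ℝ} (ht : t ∈ Ioo 0 T)
    (hA : 0 ≤ A) (h1 : s₁ ≤ s) (h2 : s₁ ≤ s/t) (h3 : s₁ * √A ≤ s/t) :
    ∃ d, HasDerivAt (fun τ => ∫ x in Ω, phi η K s (τ, x) * q (τ, x)) d t ∧
      d ≤ -(c/2) * exp (-(s/t) * K) * (∫ x in Ω, q (t, x)) + 2 * c * ∫ x in ω, q (t, x) := by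
  have sub : Ioo 0 T ×ˢ closure Ω ⊆ Ioi 0 ×ˢ closure Ω := prod_mono (fun x hx => hx.1) le_rfl
  have ht0 := ht.1
  have ht' := Ioo_subset_Icc_self ht
  have hs : 0 < s := by linarith [W.hs]
  have cφ := (phi_cont (K := K) W.hη s).mono sub
  have cφt := (phit_cont (K := K) W.hη s).mono sub
  refine ⟨_, h.evol cφ cφt (fun t ht x _ => phi_deriv s ht.1 x) ht, ?_⟩
  have g := green_le h.hΩ h.hΩb (phi_c2 (K := K) W.hη s t) (h.c2 t ht)
    (fun x hx => (phi_pos hs ht0 (W.pos x hx)).le)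
    (fun x hx => h.nonneg (t, x) ⟨ht', subset_closure hx⟩)
    (fun x hx => by simp [phi, W.bd x hx])
    (fun x hx h0 => absurd h0 (phi_pos hs ht0 (W.pos x hx)).ne')
  have cφ' := slice_cont cφ ht
  have cφt' := slice_cont cφt ht
  have cq := (h.c2 t ht).cont
  have cL := (phi_c2 (Ω := Ω) (K := K) W.hη s t).contLap
  have cLq := (h.c2 t ht).contLap
  have i0 : IntegrableOn (fun x => phit η K s (t, x) * q (t, x) + phi η K s (t, x) * qt (t, x)) Ω :=
    intOn h.hΩb ((cφt'.mul cq).add (cφ'.mul (slice_cont h.contqt ht)))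
  have i1 : IntegrableOn (fun x => phi η K s (t, x) * spaceLaplacian (fun z => q (t, z)) x) Ω :=
    intOn h.hΩb (cφ'.mul cLq)
  have i2 : IntegrableOn (fun x => q (t, x) * spaceLaplacian (fun z => phi η K s (t, z)) x) Ω :=
    intOn h.hΩb (cq.mul cL)
  have iq : IntegrableOn (fun x => q (t, x)) Ω := intOn h.hΩb cq
  have i3 : IntegrableOn (fun x => -(c/2) * exp (-(s/t) * K) * q (t, x)) Ω := iq.const_mul _
  have i4 : IntegrableOn (ω.indicator (fun x => 2 * c * q (t, x))) Ω :=
    (iq.const_mul _).indicator W.hωo.measurableSet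
  have i01 : IntegrableOn (fun x => (phit η K s (t, x) * q (t, x) + phi η K s (t, x) * qt (t, x)) + phi η K s (t, x) * spaceLaplacian (fun z => q (t, z)) x) Ω := i0.add i1
  have main := setIntegral_mono_on (i01.sub i2) (i3.add i4) h.hΩ.measurableSet (fun x hx => by
    have k0 := W.pointwise ht0 hA h1 h2 h3 hx
    have k1 := (abs_le.1 (h.ineq t ht x hx)).2
    have k2 := (phi_pos (K := K) hs ht0 (W.pos x hx)).le
    have k3 := h.nonneg (t, x) ⟨ht', subset_closure hx⟩
    have k4 := mul_le_mul_of_nonneg_left k1 k2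
    have k5 := mul_le_mul_of_nonneg_right k0 k3
    have k6 : ω.indicator (fun x => 2 * c * q (t, x)) x = ω.indicator (fun _ => 2 * c) x * q (t, x) := by
      by_cases hxo : x ∈ ω <;> simp [hxo]
    simp only [Pi.sub_apply, Pi.add_apply, k6]
    nlinarith)
  simp only [Pi.sub_apply, Pi.add_apply] at main
  rw [integral_sub i01 i2, integral_add i0 i1, integral_add i3 i4, integral_const_mul,
    setIntegral_indicator W.hωo.measurableSet, inter_eq_right.2 W.hωΩ, integral_const_mul] at main
  linarith

end Part4

section Part5

open Filter Topology

lemma anti_aux {F F' : ℝ → ℝ} {a b : ℝ} (hab : a ≤ b) (h : ∀ t ∈ Icc a b, HasDerivAt F (F' t) t)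
    (h' : ∀ t ∈ Icc a b, F' t ≤ 0) : F b ≤ F a := by
  have : AntitoneOn F (Icc a b) := by
    refine antitoneOn_of_deriv_nonpos (convex_Icc a b)
      (fun t ht => (h t ht).continuousAt.continuousWithinAt) (fun t ht => ?_) (fun t ht => ?_)
    · exact (h t (interior_subset ht)).differentiableAt.differentiableWithinAt
    · rw [(h t (interior_subset ht)).deriv]; exact h' t (interior_subset ht)
  exact this ⟨le_rfl, hab⟩ ⟨hab, le_rfl⟩ hab

lemma obs_point {N : ℕ} {Ω ω₀ ω : Set (EuclideanSpace ℝ (Fin N))} {T A : ℝ}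
    {q qt : ℝ × EuclideanSpace ℝ (Fin N) → ℝ} {η : EuclideanSpace ℝ (Fin N) → ℝ} {K c D s₁ : ℝ}
    (h : Sol Ω T A q qt) (W : Wt Ω ω₀ ω η K c D s₁) (hN : 1 ≤ N) (hT : 0 < T) (hA : 0 ≤ A)
    {x₀ : EuclideanSpace ℝ (Fin N)} (hx₀ : x₀ ∈ Ω) :
    q (0, x₀) * (exp (-(1/4)) * (volume (Metric.ball (0 : EuclideanSpace ℝ (Fin N)) 1)).toReal) * T ≤
      16 * exp (2 * (s₁ * (1/T + 1 + √A)) * K + A * T + N/T) *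
        ∫ t in Ioo (0:ℝ) T, ∫ x in ω, q (t, x) := by
  set cN := exp (-(1/4)) * (volume (Metric.ball (0 : EuclideanSpace ℝ (Fin N)) 1)).toReal with hcN
  set s := s₁ * (1 + T + T * √A) with hs
  have hs1 := W.hs
  have hc := W.hc
  have hK := W.hK1
  have hsA := sqrt_nonneg A
  have h1 : s₁ ≤ s := by
    rw [hs]; nlinarith [mul_nonneg hT.le hsA]
  have hs0 : 0 < s := by linarith
  have esT : s₁ * (1/T + 1 + √A) = s/T := by rw [hs]; field_simp
  have hst : ∀ t ∈ Ioo 0 T, s/T ≤ s/t := fun t ht => by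
    have := ht.1; have := ht.2.le; gcongr
  have h2 : ∀ t ∈ Ioo 0 T, s₁ ≤ s/t := fun t ht => by
    refine le_trans ?_ (hst t ht); rw [← esT]
    have : 0 < 1/T := by positivity
    nlinarith
  have h3 : ∀ t ∈ Ioo 0 T, s₁ * √A ≤ s/t := fun t ht => by
    refine le_trans ?_ (hst t ht); rw [← esT]
    have : 0 < 1/T := by positivity
    nlinarith
  set J : ℝ → ℝ := fun τ => ∫ x in Ω, phi η K s (τ, x) * q (τ, x) with hJ
  set p : ℝ → ℝ := fun t => ∫ x in ω, q (t, x) with hp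
  set m : ℝ → ℝ := fun t => ∫ x in Ω, q (t, x) with hm
  have pc : ContinuousOn p (Icc 0 T) := cont_param W.hωo h.hΩb W.hωΩ h.cont
  have p0 : ∀ t ∈ Icc 0 T, 0 ≤ p t := fun t ht =>
    setIntegral_nonneg W.hωo.measurableSet fun x hx => h.nonneg (t, x) ⟨ht, subset_closure (W.hωΩ hx)⟩
  have m0 : ∀ t ∈ Icc 0 T, 0 ≤ m t := fun t ht =>
    setIntegral_nonneg h.hΩ.measurableSet fun x hx => h.nonneg (t, x) ⟨ht, subset_closure hx⟩
  set P : ℝ → ℝ := fun t => ∫ τ in (0:ℝ)..t, p τ with hP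
  have ii : ∀ a ∈ Icc 0 T, ∀ b ∈ Icc 0 T, IntervalIntegrable p volume a b := fun a ha b hb =>
    (pc.mono (uIcc_subset_Icc ha hb)).intervalIntegrable
  have z0 : (0:ℝ) ∈ Icc 0 T := ⟨le_rfl, hT.le⟩
  have zT : T ∈ Icc 0 T := ⟨hT.le, le_rfl⟩
  have Pd : ∀ t ∈ Ioo 0 T, HasDerivAt P (p t) t := fun t ht => by
    refine intervalIntegral.integral_hasDerivAt_right (ii 0 z0 t (Ioo_subset_Icc_self ht)) ?_
      (pc.continuousAt (Icc_mem_nhds ht.1 ht.2))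
    exact (pc.mono Ioo_subset_Icc_self).stronglyMeasurableAtFilter isOpen_Ioo _ ht
  have P0 : ∀ t ∈ Icc 0 T, 0 ≤ P t := fun t ht =>
    intervalIntegral.integral_nonneg ht.1 fun u hu => p0 u ⟨hu.1, hu.2.trans ht.2⟩
  have PT : ∀ t ∈ Icc 0 T, P t ≤ P T := fun t ht => by
    have e := intervalIntegral.integral_add_adjacent_intervals (ii 0 z0 t ht) (ii t ht T zT)
    have := intervalIntegral.integral_nonneg (f := p) (μ := volume) ht.2 fun u hu => p0 u ⟨ht.1.trans hu.1, hu.2⟩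
    simp only [hP]; linarith
  have ePT : P T = ∫ t in Ioo (0:ℝ) T, p t := by
    simp only [hP]; rw [intervalIntegral.integral_of_le hT.le, integral_Ioc_eq_integral_Ioo]
  rw [← ePT]
  have J0 : ∀ t ∈ Ioo 0 T, 0 ≤ J t := fun t ht =>
    setIntegral_nonneg h.hΩ.measurableSet fun x hx =>
      mul_nonneg (phi_pos hs0 ht.1 (W.pos x hx)).le
        (h.nonneg (t, x) ⟨Ioo_subset_Icc_self ht, subset_closure hx⟩)
  have car : ∀ t, ∃ d, t ∈ Ioo 0 T → HasDerivAt J d t ∧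
      d ≤ -(c/2) * exp (-(s/t) * K) * m t + 2 * c * p t := fun t => by
    by_cases ht : t ∈ Ioo 0 T
    · obtain ⟨d, hd⟩ := carleman h W ht hA h1 (h2 t ht) (h3 t ht)
      exact ⟨d, fun _ => hd⟩
    · exact ⟨0, fun h => absurd h ht⟩
  choose d hd using car
  -- step a
  have stepa : J (T/2) - 2 * c * P (T/2) ≤ 0 := by
    obtain ⟨Q, hQ⟩ := (isCompact_Icc.prod h.hΩb.isCompact_closure).exists_bound_of_continuousOn h.cont
    set B := (1/s) * Q * volume.real Ω with hB
    have key : ∀ δ ∈ Ioo 0 (T/2), J (T/2) - 2 * c * P (T/2) ≤ B * δ := by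
      intro δ hδ
      have hδT : δ ∈ Ioo 0 T := ⟨hδ.1, by linarith [hδ.2]⟩
      have sub : ∀ t ∈ Icc δ (T/2), t ∈ Ioo 0 T := fun t ht =>
        ⟨hδ.1.trans_le ht.1, by linarith [ht.2]⟩
      have a1 := anti_aux (F := fun t => J t - 2 * c * P t) (F' := fun t => d t - 2 * c * p t) hδ.2.le
        (fun t ht => (hd t (sub t ht)).1.sub ((Pd t (sub t ht)).const_mul (2*c)))
        (fun t ht => by
          have := (hd t (sub t ht)).2
          have k := m0 t (Ioo_subset_Icc_self (sub t ht))
          have : 0 ≤ (c/2) * exp (-(s/t) * K) * m t := by positivity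
          linarith)
      have a2 := P0 δ (Ioo_subset_Icc_self hδT)
      have a3 : ‖J δ‖ ≤ (δ/s * Q) * volume.real Ω := by
        refine norm_setIntegral_le_of_norm_le_const h.hΩb.measure_lt_top fun x hx => ?_
        rw [norm_mul]
        have b1 := hQ (δ, x) ⟨Ioo_subset_Icc_self hδT, subset_closure hx⟩
        have b2 : ‖phi η K s (δ, x)‖ ≤ δ/s := by
          rw [norm_of_nonneg (phi_pos hs0 hδ.1 (W.pos x hx)).le]
          unfold phi
          have hS : 0 < s/δ := div_pos hs0 hδ.1
          have b3 : exp (-(s/δ) * K) * exp (s/δ * η x) ≤ exp (-(s/δ)) := by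
            rw [← exp_add, exp_le_exp]; nlinarith [W.hK x hx]
          have b4 : exp (-(s/δ)) ≤ δ/s := by
            rw [exp_neg, ← inv_div s δ]
            have b5 : s/δ ≤ exp (s/δ) := by linarith [add_one_le_exp (s/δ)]
            exact inv_anti₀ hS b5
          have := exp_pos (-(s/δ) * K)
          simp only
          linarith
        have : 0 ≤ δ/s := by have := hδ.1; positivity
        gcongr
      have a4 := (le_abs_self (J δ)).trans a3
      have a5 : (δ/s * Q) * volume.real Ω = B * δ := by rw [hB]; ring
      have : 0 ≤ 2 * c * P δ := by positivity
      linarith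
    have tt : Tendsto (fun δ : ℝ => B * δ) (𝓝[>] 0) (𝓝 0) := by
      have : Tendsto (fun δ : ℝ => B * δ) (𝓝 0) (𝓝 (B * 0)) := tendsto_id.const_mul B
      rw [mul_zero] at this
      exact this.mono_left nhdsWithin_le_nhds
    refine ge_of_tendsto tt ?_
    filter_upwards [Ioo_mem_nhdsGT (show (0:ℝ) < T/2 by positivity)] with δ hδ using key δ hδ
  -- step b
  set E := 2 * (s/T) * K + A * T + N/T with hE
  rw [esT, ← hE]
  set y := q (0, x₀) * cN with hy
  have hy0 : 0 ≤ y := mul_nonneg (h.nonneg (0, x₀) ⟨z0, subset_closure hx₀⟩) (by positivity)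
  have sub : ∀ t ∈ Icc (T/2) (3*T/4), t ∈ Ioo 0 T := fun t ht =>
    ⟨by linarith [ht.1], by linarith [ht.2]⟩
  have b1 : ∀ t ∈ Icc (T/2) (3*T/4), (c/2) * (exp (-E) * y) ≤ (c/2) * (exp (-(s/t) * K) * m t) := by
    intro t ht
    have ht0 := (sub t ht).1
    have k1 := h.smoothing hN hx₀ (sub t ht)
    have k2 : s/t ≤ 2 * (s/T) := by
      have := ht.1
      calc s/t ≤ s/(T/2) := by gcongr
        _ = _ := by field_simp
    have k3 : (N:ℝ)/(2*t) ≤ N/T := by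
      have := ht.1
      gcongr; linarith
    have k4 : A * t ≤ A * T := by have := (sub t ht).2.le; gcongr
    have k5 : -E + (A * t + N/(2*t)) ≤ -(s/t) * K := by
      rw [hE]; nlinarith
    have hm0 := m0 t (Ioo_subset_Icc_self (sub t ht))
    refine mul_le_mul_of_nonneg_left ?_ (by positivity)
    calc exp (-E) * y ≤ exp (-E) * (exp (A * t + N/(2*t)) * m t) := by gcongr
      _ = exp (-E + (A * t + N/(2*t))) * m t := by rw [exp_add (-E)]; ring
      _ ≤ _ := by gcongr
  set κ := (c/2) * (exp (-E) * y) with hκ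
  have a1 := anti_aux (F := fun t => J t - 2 * c * P t + κ * t) (F' := fun t => d t - 2 * c * p t + κ * 1)
    (show T/2 ≤ 3*T/4 by linarith)
    (fun t ht => ((hd t (sub t ht)).1.sub ((Pd t (sub t ht)).const_mul (2*c))).add
      ((hasDerivAt_id t).const_mul κ))
    (fun t ht => by
      have := (hd t (sub t ht)).2
      have := b1 t ht
      linarith)
  have m34 : 3*T/4 ∈ Ioo 0 T := sub _ ⟨by linarith, le_rfl⟩
  have a2 := J0 _ m34
  have a3 := PT _ (Ioo_subset_Icc_self m34)
  have a4 : κ * (T/4) ≤ 2 * c * P T := by nlinarith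
  have a5 : exp (-E) * y * T ≤ 16 * P T := by
    rw [hκ] at a4
    have : c * (exp (-E) * y * T) ≤ c * (16 * P T) := by nlinarith
    exact le_of_mul_le_mul_left this hc
  calc y * T = exp E * (exp (-E) * y * T) := by
        rw [← mul_assoc, ← mul_assoc, ← exp_add]; simp
    _ ≤ exp E * (16 * P T) := by gcongr
    _ = _ := by ring

end Part5

section Part6

open Filter Topology

lemma exists_Wt {N : ℕ} {Ω ω₀ ω : Set (EuclideanSpace ℝ (Fin N))} (hΩb : Bornology.IsBounded Ω)
    (hωo : IsOpen ω) (hω₀ω : closure ω₀ ⊆ ω) (hωΩ : ω ⊆ Ω)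
    {η : EuclideanSpace ℝ (Fin N) → ℝ} (hη : ContDiff ℝ 2 η)
    (hηpos : ∀ x ∈ Ω, 0 < η x) (hηbd : ∀ x ∈ frontier Ω, η x = 0)
    (hηgrad : ∀ x ∈ closure (Ω \ ω₀), 0 < ‖gradient η x‖) :
    ∃ K c D s₁ : ℝ, Wt Ω ω₀ ω η K c D s₁ := by
  obtain ⟨M, hM⟩ := hΩb.isCompact_closure.exists_bound_of_continuousOn hη.continuous.continuousOn
  obtain ⟨D, hD⟩ := hΩb.isCompact_closure.exists_bound_of_continuousOn
    (C2On.of_contDiff (s := closure Ω) hη).contLap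
  have hc : ∃ c : ℝ, 0 < c ∧ ∀ x ∈ closure (Ω \ ω₀), c ≤ gsq η x := by
    rcases (closure (Ω \ ω₀)).eq_empty_or_nonempty with he | hne
    · exact ⟨1, one_pos, by simp [he]⟩
    · obtain ⟨x, hx, hx'⟩ := (hΩb.subset sdiff_subset).isCompact_closure.exists_isMinOn hne
        (gsq_cont hη).continuousOn
      exact ⟨gsq η x, gsq_pos (hηgrad x hx), fun y hy => hx' hy⟩
  obtain ⟨c, hc0, hc⟩ := hc
  set K := max M 0 + 1 with hK
  set D' := max D 0 with hD'
  refine ⟨K, c, D', max 1 ((K + D' + 1) / (c/2)), ?_⟩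
  exact {
    hωo := hωo
    hω₀ω := subset_closure.trans hω₀ω
    hωΩ := hωΩ
    hη := hη
    pos := hηpos
    bd := hηbd
    hK := fun x hx => by
      have := (le_abs_self _).trans (hM x (subset_closure hx))
      have := le_max_left M 0
      rw [hK]; linarith
    hK1 := by rw [hK]; linarith [le_max_right M 0]
    hD := fun x hx => (hD x (subset_closure hx)).trans (le_max_left _ _)
    hc := hc0
    hD0 := le_max_right _ _
    hg := fun x hx hx' => hc x (subset_closure ⟨hx, hx'⟩)
    hs := le_max_left _ _
    hsc := by
      rw [← div_le_iff₀ (by positivity)]; exact le_max_right _ _ }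

lemma exists_Sol {N : ℕ} {Ω : Set (EuclideanSpace ℝ (Fin N))} (hΩo : IsOpen Ω)
    (hΩb : Bornology.IsBounded Ω) {T : ℝ}
    (a : ℝ × EuclideanSpace ℝ (Fin N) → ℝ)
    (hB : ∃ B : ℝ, ∀ p ∈ Set.Ioo (0:ℝ) T ×ˢ Ω, |a p| ≤ B)
    (q qt : ℝ × EuclideanSpace ℝ (Fin N) → ℝ)
    (h1 : ContinuousOn q (Set.Icc 0 T ×ˢ closure Ω))
    (h2 : ∀ p ∈ Set.Icc 0 T ×ˢ closure Ω, 0 ≤ q p)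
    (h3 : ∀ p ∈ Set.Ioo 0 T ×ˢ closure Ω,
          HasDerivAt (fun τ => q (τ, p.2)) (qt p) p.1)
    (h4 : ContinuousOn qt (Set.Ioo 0 T ×ˢ closure Ω))
    (h5 : ∀ p ∈ Set.Ioo 0 T ×ˢ closure Ω,
          DifferentiableAt ℝ (fun z => q (p.1, z)) p.2)
    (h6 : ∀ p ∈ Set.Ioo 0 T ×ˢ closure Ω,
          DifferentiableAt ℝ (fun y => fderiv ℝ (fun z => q (p.1, z)) y) p.2)
    (h7 : ContinuousOn (fun p : ℝ × EuclideanSpace ℝ (Fin N) =>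
          fderiv ℝ (fun z => q (p.1, z)) p.2) (Set.Ioo 0 T ×ˢ closure Ω))
    (h8 : ContinuousOn (fun p : ℝ × EuclideanSpace ℝ (Fin N) =>
          fderiv ℝ (fun y => fderiv ℝ (fun z => q (p.1, z)) y) p.2)
          (Set.Ioo 0 T ×ˢ closure Ω))
    (h9 : ∀ t ∈ Set.Ioo (0:ℝ) T, ∀ x ∈ Ω,
          -qt (t, x) - spaceLaplacian (fun z => q (t, z)) x
            + a (t, x) * q (t, x) = 0)
    (h10 : ∀ t ∈ Set.Ioo (0:ℝ) T, ∀ x ∈ frontier Ω, q (t, x) = 0) :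
    Sol Ω T (eLpNorm a ⊤ (volume.restrict (Set.Ioo (0:ℝ) T ×ˢ Ω))).toReal q qt := by
  set A := (eLpNorm a ⊤ (volume.restrict (Set.Ioo (0:ℝ) T ×ˢ Ω))).toReal with hA
  have hU : IsOpen (Ioo (0:ℝ) T ×ˢ Ω) := isOpen_Ioo.prod hΩo
  have sub : Ioo (0:ℝ) T ×ˢ Ω ⊆ Ioo 0 T ×ˢ closure Ω := prod_mono le_rfl subset_closure
  have sub' : Ioo (0:ℝ) T ×ˢ Ω ⊆ Icc 0 T ×ˢ closure Ω := prod_mono Ioo_subset_Icc_self subset_closure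
  have ae1 : ∀ᵐ p ∂(volume.restrict (Ioo (0:ℝ) T ×ˢ Ω)), |a p| ≤ A := by
    obtain ⟨B, hB⟩ := hB
    have fin : eLpNorm a ⊤ (volume.restrict (Set.Ioo (0:ℝ) T ×ˢ Ω)) ≠ ⊤ := by
      rw [eLpNorm_exponent_top]
      refine (eLpNormEssSup_lt_top_of_ae_bound (C := B) ?_).ne
      filter_upwards [ae_restrict_mem hU.measurableSet] with p hp using hB p hp
    filter_upwards [ae_le_eLpNormEssSup (f := a) (μ := volume.restrict (Ioo (0:ℝ) T ×ˢ Ω))] with p hp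
    rw [← eLpNorm_exponent_top] at hp
    have := ENNReal.toReal_mono fin hp
    simpa [hA] using this
  have cL : ContinuousOn (fun p : ℝ × EuclideanSpace ℝ (Fin N) =>
      spaceLaplacian (fun z => q (p.1, z)) p.2) (Ioo (0:ℝ) T ×ˢ Ω) := by
    have : ContinuousOn (fun p : ℝ × EuclideanSpace ℝ (Fin N) =>
      ∑ i : Fin N, fderiv ℝ (fun y => fderiv ℝ (fun z => q (p.1, z)) y) p.2 (EuclideanSpace.single i 1)
      (EuclideanSpace.single i 1)) (Ioo (0:ℝ) T ×ˢ Ω) :=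
      continuousOn_finsetSum _ fun i _ =>
        ((h8.mono sub).clm_apply continuousOn_const).clm_apply continuousOn_const
    exact this.congr fun p hp => lap_eq (h6 p (sub hp))
  have key : EqOn (fun p : ℝ × EuclideanSpace ℝ (Fin N) =>
      max (|qt p + spaceLaplacian (fun z => q (p.1, z)) p.2| - A * q p) 0) (fun _ => 0)
      (Ioo (0:ℝ) T ×ˢ Ω) := by
    refine Measure.eqOn_open_of_ae_eq (μ := volume) ?_ hU ?_ continuousOn_const
    · filter_upwards [ae1, ae_restrict_mem hU.measurableSet] with p hp hpU
      have e := h9 p.1 hpU.1 p.2 hpU.2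
      have e' : qt p + spaceLaplacian (fun z => q (p.1, z)) p.2 = a p * q p := by linarith
      have q0 := h2 p (sub' hpU)
      rw [max_eq_right]
      rw [e', abs_mul, abs_of_nonneg q0]
      have := mul_le_mul_of_nonneg_right hp q0
      linarith
    · exact ((((h4.mono sub).add cL).abs.sub ((h1.mono sub').const_mul A)).sup continuousOn_const)
  exact {
    hΩ := hΩo
    hΩb := hΩb
    cont := h1
    nonneg := h2
    der := h3
    contqt := h4
    c2 := fun t ht => {
      d1 := fun x hx => h5 (t, x) ⟨ht, hx⟩
      d2 := fun x hx => h6 (t, x) ⟨ht, hx⟩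
      c1 := h7.comp (f := fun x => (t, x)) (by fun_prop) (fun x hx => ⟨ht, hx⟩)
      c2 := h8.comp (f := fun x => (t, x)) (by fun_prop) (fun x hx => ⟨ht, hx⟩) }
    ineq := fun t ht x hx => by
      have := key (x := (t, x)) ⟨ht, hx⟩
      have := max_eq_right_iff.1 this
      simp only at this
      linarith
    bd := h10 }


end Part6

theorem observability_L2_L1_dirichlet
    (N : ℕ) (hN : 1 ≤ N)
    (Ω ω₀ ω : Set (EuclideanSpace ℝ (Fin N)))
    (hΩo : IsOpen Ω) (hΩb : Bornology.IsBounded Ω) (hΩc : IsConnected Ω)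
    (hω₀o : IsOpen ω₀) (hω₀ne : ω₀.Nonempty) (hωo : IsOpen ω) (hωne : ω.Nonempty)
    (hω₀ω : closure ω₀ ⊆ ω) (hωΩ : ω ⊆ Ω)
    (η : EuclideanSpace ℝ (Fin N) → ℝ) (hη : ContDiff ℝ 2 η)
    (hηpos : ∀ x ∈ Ω, 0 < η x) (hηbd : ∀ x ∈ frontier Ω, η x = 0)
    (hηgrad : ∀ x ∈ closure (Ω \ ω₀), 0 < ‖gradient η x‖) :
    ∃ C > (0:ℝ),
      ∀ T : ℝ, 0 < T →
      ∀ a : ℝ × EuclideanSpace ℝ (Fin N) → ℝ, Measurable a →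
      (∃ B : ℝ, ∀ p ∈ Set.Ioo (0:ℝ) T ×ˢ Ω, |a p| ≤ B) →
      ∀ q qt : ℝ × EuclideanSpace ℝ (Fin N) → ℝ,
        ContinuousOn q (Set.Icc 0 T ×ˢ closure Ω) →
        (∀ p ∈ Set.Icc 0 T ×ˢ closure Ω, 0 ≤ q p) →
        (∀ p ∈ Set.Ioo 0 T ×ˢ closure Ω,
          HasDerivAt (fun τ => q (τ, p.2)) (qt p) p.1) →
        ContinuousOn qt (Set.Ioo 0 T ×ˢ closure Ω) →
        (∀ p ∈ Set.Ioo 0 T ×ˢ closure Ω,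
          DifferentiableAt ℝ (fun z => q (p.1, z)) p.2) →
        (∀ p ∈ Set.Ioo 0 T ×ˢ closure Ω,
          DifferentiableAt ℝ (fun y => fderiv ℝ (fun z => q (p.1, z)) y) p.2) →
        ContinuousOn (fun p : ℝ × EuclideanSpace ℝ (Fin N) =>
          fderiv ℝ (fun z => q (p.1, z)) p.2) (Set.Ioo 0 T ×ˢ closure Ω) →
        ContinuousOn (fun p : ℝ × EuclideanSpace ℝ (Fin N) =>
          fderiv ℝ (fun y => fderiv ℝ (fun z => q (p.1, z)) y) p.2)
          (Set.Ioo 0 T ×ˢ closure Ω) →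
        (∀ t ∈ Set.Ioo (0:ℝ) T, ∀ x ∈ Ω,
          -qt (t, x) - spaceLaplacian (fun z => q (t, z)) x
            + a (t, x) * q (t, x) = 0) →
        (∀ t ∈ Set.Ioo (0:ℝ) T, ∀ x ∈ frontier Ω, q (t, x) = 0) →
        (∫ x in Ω, q (0, x) ^ 2)
          ≤ Real.exp (C * (1 + 1/T + T * (eLpNorm a ⊤ (volume.restrict (Set.Ioo (0:ℝ) T ×ˢ Ω))).toReal + Real.sqrt (eLpNorm a ⊤ (volume.restrict (Set.Ioo (0:ℝ) T ×ˢ Ω))).toReal)) *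
            (∫ t in Set.Ioo (0:ℝ) T, ∫ x in ω, q (t, x)) ^ 2 := by
  obtain ⟨K, c, D, s₁, W⟩ := exists_Wt hΩb hωo hω₀ω hωΩ hη hηpos hηbd hηgrad
  set cN := exp (-(1/4)) * (volume (Metric.ball (0 : EuclideanSpace ℝ (Fin N)) 1)).toReal with hcN
  have hcN0 : 0 < cN := by
    have : 0 < (volume (Metric.ball (0 : EuclideanSpace ℝ (Fin N)) 1)).toReal :=
      ENNReal.toReal_pos (Metric.measure_ball_pos _ _ one_pos).ne' Metric.isBounded_ball.measure_lt_top.ne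
    positivity
  have hs1 := W.hs
  have hK1 := W.hK1
  set L := 16/cN + 1 + (2*K*s₁ + 1 + N) with hL
  have hL0 : 0 < L := by positivity
  have hV : 0 ≤ volume.real Ω := measureReal_nonneg
  refine ⟨volume.real Ω + 2 * L, by positivity, ?_⟩
  intro T hT a _ hB q qt h1 h2 h3 h4 h5 h6 h7 h8 h9 h10
  have S := exists_Sol hΩo hΩb a hB q qt h1 h2 h3 h4 h5 h6 h7 h8 h9 h10
  set A := (eLpNorm a ⊤ (volume.restrict (Set.Ioo (0:ℝ) T ×ˢ Ω))).toReal with hA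
  have hA0 : 0 ≤ A := ENNReal.toReal_nonneg
  have hsA := sqrt_nonneg A
  set X := 1 + 1/T + T * A + √A with hX
  have hT' : 0 < 1/T := by positivity
  have hTA : 0 ≤ T * A := by positivity
  have hX1 : 1 ≤ X := by linarith
  set P := ∫ t in Set.Ioo (0:ℝ) T, ∫ x in ω, q (t, x) with hP
  have hP0 : 0 ≤ P := setIntegral_nonneg measurableSet_Ioo fun t ht =>
    setIntegral_nonneg hωo.measurableSet fun x hx =>
      h2 (t, x) ⟨Ioo_subset_Icc_self ht, subset_closure (hωΩ hx)⟩
  have bound : ∀ x ∈ Ω, q (0, x) ≤ exp (L * X) * P := by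
    intro x hx
    have k := obs_point S W hN hT hA0 hx
    rw [← hcN] at k
    set E := 2 * (s₁ * (1/T + 1 + √A)) * K + A * T + N/T with hE
    have kE : E ≤ (2*K*s₁ + 1 + N) * X := by
      have e1 : (1/T + 1 + √A) ≤ X := by linarith
      have e2 : 2 * (s₁ * (1/T + 1 + √A)) * K ≤ 2 * K * s₁ * X := by
        calc 2 * (s₁ * (1/T + 1 + √A)) * K = 2 * K * s₁ * (1/T + 1 + √A) := by ring
          _ ≤ _ := by gcongr
      have e3 : (N:ℝ)/T ≤ N * X := by
        rw [div_eq_mul_one_div]; gcongr; linarith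
      have e4 : A * T ≤ X := by linarith
      linarith
    calc q (0, x) = (1/cN) * (1/T) * (q (0, x) * cN * T) := by field_simp
      _ ≤ (1/cN) * (1/T) * (16 * exp E * P) := by gcongr
      _ = (16/cN) * (1/T) * exp E * P := by ring
      _ ≤ exp (16/cN * X) * exp X * exp ((2*K*s₁ + 1 + N) * X) * P := by
        have f1 : 16/cN ≤ exp (16/cN * X) := by
          have : 16/cN ≤ 16/cN * X := le_mul_of_one_le_right (by positivity) hX1
          linarith [add_one_le_exp (16/cN * X)]
        have f2 : 1/T ≤ exp X := by
          linarith [add_one_le_exp X]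
        gcongr
      _ = exp (L * X) * P := by
        rw [← exp_add, ← exp_add]; congr 2; rw [hL]; ring
  have hcont : ContinuousOn (fun x => q (0, x)) (closure Ω) := slice_cont h1 ⟨le_rfl, hT.le⟩
  have fin := finite_restrict hΩb
  calc ∫ x in Ω, q (0, x)^2 ≤ ∫ x in Ω, (exp (L * X) * P)^2 := by
        refine setIntegral_mono_on (intOn hΩb (hcont.pow 2)) (integrable_const _) hΩo.measurableSet ?_
        intro x hx
        have := h2 (0, x) ⟨⟨le_rfl, hT.le⟩, subset_closure hx⟩
        have := bound x hx
        gcongr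
    _ = volume.real Ω * exp (2 * L * X) * P^2 := by
        rw [setIntegral_const, smul_eq_mul, mul_pow, ← exp_nat_mul]
        push_cast
        rw [mul_assoc, mul_assoc 2 L X]
    _ ≤ exp (volume.real Ω * X) * exp (2 * L * X) * P^2 := by
        have : volume.real Ω ≤ exp (volume.real Ω * X) := by
          have : volume.real Ω ≤ volume.real Ω * X := le_mul_of_one_le_right hV hX1
          linarith [add_one_le_exp (volume.real Ω * X)]
        gcongr
    _ = _ := by rw [← exp_add]; congr 2; ring
end

section
/- The function g is continuous on ℝ. Moreover, if f satisfies the growth condition for some α ∈ (0,2], then for every ε > 0 there exists a constant C_ε > 0 such that |g(s)|^{1/2} ≤ ε log(2 + |s|) + C_ε for every s ∈ ℝ. -/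
theorem g_continuous_and_log_bound (f : ℝ → ℝ) (hf : ContDiff ℝ 1 f) (hf0 : f 0 = 0)
    (g : ℝ → ℝ) (hg : ∀ s : ℝ, s ≠ 0 → g s = f s / s) (hg0 : g 0 = deriv f 0) :
    Continuous g ∧
    (∀ α : ℝ, 0 < α → α ≤ 2 →
      Filter.Tendsto (fun s : ℝ => f s / (|s| * Real.log (1 + |s|) ^ α))
        (Filter.cocompact ℝ) (nhds 0) →
      ∀ ε > (0 : ℝ), ∃ C > (0 : ℝ), ∀ s : ℝ,
        Real.sqrt |g s| ≤ ε * Real.log (2 + |s|) + C) := by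
  have hd : Differentiable ℝ f := hf.differentiable (by norm_num)
  have hgd : g = dslope f 0 := by
    funext s
    by_cases hs : s = 0
    · subst hs; rw [hg0, dslope_same]
    · rw [hg s hs, dslope_of_ne _ hs, slope_def_field, hf0]; simp
  have hc : Continuous g := by
    rw [hgd, continuous_iff_continuousAt]
    intro s
    by_cases hs : s = 0
    · subst hs; exact continuousAt_dslope_same.2 (hd 0)
    · exact (continuousAt_dslope_of_ne hs).2 (hd s).continuousAt
  refine ⟨hc, ?_⟩
  intro α hα hα2 ht ε hε
  have h1 : ∀ᶠ s in Filter.cocompact ℝ,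
      |f s / (|s| * Real.log (1 + |s|) ^ α)| < ε ^ 2 := by
    have := ht.abs
    rw [abs_zero] at this
    exact this.eventually (gt_mem_nhds (by positivity))
  have h2 : ∀ᶠ s in Filter.cocompact ℝ, Real.exp 1 ≤ |s| := by
    have := tendsto_norm_cocompact_atTop (E := ℝ)
    exact this.eventually (Filter.eventually_ge_atTop (Real.exp 1))
  obtain ⟨K, hK, hKs⟩ := Filter.mem_cocompact.1 (h1.and h2)
  obtain ⟨M, hM⟩ := (hK.bddAbove_image (f := fun s => Real.sqrt |g s|)
    (by fun_prop : Continuous fun s => Real.sqrt |g s|).continuousOn)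
  refine ⟨max M 1, by positivity, fun s => ?_⟩
  have hl0 : 0 ≤ Real.log (2 + |s|) := Real.log_nonneg (by linarith [abs_nonneg s])
  have hm1 : (1:ℝ) ≤ max M 1 := le_max_right _ _
  have hmM : M ≤ max M 1 := le_max_left _ _
  have hel := mul_nonneg hε.le hl0
  by_cases hs : s ∈ K
  · have : Real.sqrt |g s| ≤ M := hM ⟨s, hs, rfl⟩
    linarith
  · obtain ⟨ha, hb⟩ := hKs hs
    have hpos : 0 < |s| := (Real.exp_pos 1).trans_le hb
    have hL : 1 ≤ Real.log (1 + |s|) := by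
      rw [Real.le_log_iff_exp_le (by linarith)]; linarith
    have hLL : Real.log (1 + |s|) ≤ Real.log (2 + |s|) :=
      Real.log_le_log (by linarith) (by linarith)
    have hp : Real.log (1 + |s|) ^ α ≤ Real.log (1 + |s|) ^ 2 := by
      rw [← Real.rpow_two]
      exact Real.rpow_le_rpow_of_exponent_le hL hα2
    have hp0 : 0 < Real.log (1 + |s|) ^ α := Real.rpow_pos_of_pos (by linarith) _
    have hgs : |g s| ≤ ε ^ 2 * Real.log (1 + |s|) ^ α := by
      rw [hg s (abs_pos.1 hpos), abs_div, div_le_iff₀ hpos]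
      rw [abs_div, abs_mul, abs_abs, abs_of_pos hp0, div_lt_iff₀ (by positivity)] at ha
      linarith
    have : Real.sqrt |g s| ≤ ε * Real.log (2 + |s|) := by
      apply Real.sqrt_le_iff.2 ⟨hel, ?_⟩
      calc |g s| ≤ ε ^ 2 * Real.log (1 + |s|) ^ α := hgs
        _ ≤ ε ^ 2 * Real.log (2 + |s|) ^ 2 := by
          gcongr
          exact hp.trans (by gcongr)
        _ = _ := by ring
    linarith
end

section
/- For every t ≥ T₁ one has v(t) > 0 and F(v(t)) = (t − T₁) + F(v₀). -/
open MeasureTheory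

theorem ode_solution_formula (f : ℝ → ℝ) (hf : ContDiff ℝ 1 f) (hf0 : f 0 = 0)
    (hpos : ∀ s : ℝ, 0 < s → 0 < f s)
    (hint : IntegrableOn (fun σ => 1 / f σ) (Set.Ici (1 : ℝ)))
    (F : ℝ → ℝ) (hF : ∀ s : ℝ, F s = ∫ σ in Set.Ici s, 1 / f σ)
    (T₁ v₀ : ℝ) (hv₀ : 0 < v₀) (v : ℝ → ℝ)
    (hvc : ContinuousOn v (Set.Ici T₁)) (hvT₁ : v T₁ = v₀)
    (hode : ∀ t : ℝ, T₁ < t → HasDerivAt v (-(f (v t))) t) :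
    ∀ t : ℝ, T₁ ≤ t → 0 < v t ∧ F (v t) = (t - T₁) + F v₀ := by
  have hvpos : ∀ t : ℝ, T₁ ≤ t → 0 < v t := by
    intro t ht
    by_contra hle
    have hle : v t ≤ 0 := not_lt.mp hle
    obtain ⟨c, hc, hvc0⟩ : (0 : ℝ) ∈ v '' Set.Icc T₁ t :=
      intermediate_value_Icc' ht (hvc.mono Set.Icc_subset_Ici_self) ⟨hle, by rw [hvT₁]; exact hv₀.le⟩
    have hcont : ContinuousOn v (Set.Icc T₁ c) := hvc.mono Set.Icc_subset_Ici_self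
    have hcomp : IsCompact (v '' Set.Icc T₁ c) := isCompact_Icc.image_of_continuousOn hcont
    have hneg : ContDiff ℝ 1 (fun x => -(f x)) := hf.neg
    obtain ⟨K, hK⟩ := LocallyLipschitzOn.exists_lipschitzOnWith_of_compact hcomp
      (hneg.locallyLipschitz.locallyLipschitzOn)
    have h := ODE_solution_unique_of_mem_Icc_left (v := fun _ x => -(f x))
      (s := fun _ => v '' Set.Icc T₁ c) (K := K) (f := v) (g := fun _ => 0) (a := T₁) (b := c)
      (fun _ _ => hK) hcont (fun s hs => (hode s hs.1).hasDerivWithinAt)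
      (fun s hs => ⟨s, ⟨hs.1.le, hs.2⟩, rfl⟩) continuousOn_const
      (fun s hs => by simpa [hf0] using hasDerivWithinAt_const s (Set.Iic s) (0 : ℝ))
      (fun s hs => ⟨c, ⟨hc.1, le_rfl⟩, hvc0⟩) hvc0
    have h0 : v T₁ = 0 := h ⟨le_rfl, hc.1⟩
    linarith
  have hcf : ContinuousOn (fun σ => 1 / f σ) (Set.Ioi 0) :=
    continuousOn_const.div hf.continuous.continuousOn (fun x hx => (hpos x hx).ne')
  have hii : ∀ a b : ℝ, 0 < a → 0 < b → IntervalIntegrable (fun σ => 1 / f σ) volume a b := by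
    intro a b ha hb
    apply ContinuousOn.intervalIntegrable
    apply hcf.mono
    intro x hx
    exact lt_of_lt_of_le (lt_min ha hb) hx.1
  have hI1 : IntegrableOn (fun σ => 1 / f σ) (Set.Ioi (1 : ℝ)) :=
    hint.mono_set Set.Ioi_subset_Ici_self
  have hFs : ∀ s : ℝ, 0 < s → F s = (∫ σ in s..1, 1 / f σ) + F 1 := by
    intro s hs
    rw [hF, hF, integral_Ici_eq_integral_Ioi, integral_Ici_eq_integral_Ioi,
      intervalIntegral.integral_interval_add_Ioi' (hii s 1 hs one_pos) hI1]
  have hFd : ∀ s : ℝ, 0 < s → HasDerivAt F (-(1 / f s)) s := by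
    intro s hs
    have hca : ContinuousAt (fun σ => 1 / f σ) s := hcf.continuousAt (Ioi_mem_nhds hs)
    have h1 := intervalIntegral.integral_hasDerivAt_left (hii s 1 hs one_pos)
      (hcf.stronglyMeasurableAtFilter isOpen_Ioi s hs) hca
    refine (h1.add_const (F 1)).congr_of_eventuallyEq ?_
    filter_upwards [Ioi_mem_nhds hs] with x hx using hFs x hx
  intro t ht
  refine ⟨hvpos t ht, ?_⟩
  rcases ht.eq_or_lt with rfl | hlt
  · simp [hvT₁]
  have hc : ContinuousOn (fun s => F (v s)) (Set.Icc T₁ t) := by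
    intro s hs
    exact (hFd (v s) (hvpos s hs.1)).continuousAt.comp_continuousWithinAt
      ((hvc s hs.1).mono Set.Icc_subset_Ici_self)
  obtain ⟨c, _, hce⟩ := exists_hasDerivAt_eq_slope (fun s => F (v s)) (fun _ => 1) hlt hc (by
    intro s hs
    have hp := hvpos s hs.1.le
    have h := (hFd (v s) hp).comp s (hode s hs.1)
    have he : -(1 / f (v s)) * -(f (v s)) = 1 := by
      have := (hpos _ hp).ne'
      field_simp
    rw [he] at h
    exact h)
  have hne : t - T₁ ≠ 0 := (sub_pos.mpr hlt).ne'
  rw [eq_div_iff hne, hvT₁] at hce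
  linarith
end

section
/- For every t > T₁ one has F(v(t)) ≥ t − T₁, hence v(t) ≤ F⁻¹(t − T₁) where F⁻¹ : (0,∞) → (0,∞) denotes the inverse of the strictly decreasing bijection F. Consequently, for every δ > 0, setting τ := F(δ), every such solution v (for an arbitrary initial value v₀ > 0) satisfies 0 < v(t) ≤ δ for all t ≥ T₁ + τ. -/
open MeasureTheory

theorem ode_solution_decay (f : ℝ → ℝ) (hf : ContDiff ℝ 1 f) (hf0 : f 0 = 0)
    (hpos : ∀ s : ℝ, 0 < s → 0 < f s)
    (hint : IntegrableOn (fun σ => 1 / f σ) (Set.Ici (1 : ℝ)))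
    (F : ℝ → ℝ) (hF : ∀ s : ℝ, F s = ∫ σ in Set.Ici s, 1 / f σ)
    (hanti : StrictAntiOn F (Set.Ioi 0))
    (hbij : Set.BijOn F (Set.Ioi 0) (Set.Ioi 0))
    (Finv : ℝ → ℝ) (hFinv : Set.InvOn Finv F (Set.Ioi 0) (Set.Ioi 0))
    (T₁ v₀ : ℝ) (hv₀ : 0 < v₀) (v : ℝ → ℝ)
    (hvc : ContinuousOn v (Set.Ici T₁)) (hvT₁ : v T₁ = v₀)
    (hode : ∀ t : ℝ, T₁ < t → HasDerivAt v (-(f (v t))) t) :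
    (∀ t : ℝ, T₁ < t → t - T₁ ≤ F (v t) ∧ v t ≤ Finv (t - T₁)) ∧
    (∀ δ : ℝ, 0 < δ → ∀ t : ℝ, T₁ + F δ ≤ t → 0 < v t ∧ v t ≤ δ) := by
  have hcont : ContinuousOn (fun σ => 1 / f σ) (Set.Ioi 0) :=
    continuousOn_const.div hf.continuous.continuousOn (fun x hx => (hpos x hx).ne')
  have hI : ∀ s : ℝ, 0 < s → IntegrableOn (fun σ => 1 / f σ) (Set.Ioi s) := by
    intro s hs
    have h1 : IntegrableOn (fun σ => 1 / f σ) (Set.Icc s 1) :=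
      (hcont.mono (fun x hx => lt_of_lt_of_le hs hx.1)).integrableOn_Icc
    refine (h1.union hint).mono_set ?_
    intro x hx
    rcases le_total x 1 with h | h
    · exact Or.inl ⟨le_of_lt hx, h⟩
    · exact Or.inr h
  have hFe : ∀ s : ℝ, 0 < s → F s = F 1 - ∫ σ in (1:ℝ)..s, 1 / f σ := by
    intro s hs
    have := intervalIntegral.integral_interval_add_Ioi (hI 1 one_pos) (hI s hs)
    rw [hF, hF, integral_Ici_eq_integral_Ioi, integral_Ici_eq_integral_Ioi]
    linarith
  have hFd : ∀ s : ℝ, 0 < s → HasDerivAt F (-(1 / f s)) s := by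
    intro s hs
    have hii : IntervalIntegrable (fun σ => 1 / f σ) volume 1 s := by
      apply ContinuousOn.intervalIntegrable
      refine hcont.mono (fun x hx => ?_)
      exact lt_of_lt_of_le (lt_min one_pos hs) hx.1
    have hd : HasDerivAt (fun u => ∫ σ in (1:ℝ)..u, 1 / f σ) (1 / f s) s :=
      intervalIntegral.integral_hasDerivAt_right hii
        (hcont.stronglyMeasurableAtFilter isOpen_Ioi s hs)
        (hcont.continuousAt (isOpen_Ioi.mem_nhds hs))
    have hd2 := hd.const_sub (F 1)
    refine hd2.congr_of_eventuallyEq ?_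
    filter_upwards [isOpen_Ioi.mem_nhds hs] with x hx using hFe x hx
  have key : ∀ b : ℝ, T₁ ≤ b → (∀ t ∈ Set.Icc T₁ b, 0 < v t) →
      F (v b) = F v₀ + (b - T₁) := by
    intro b hb hp
    rcases hb.eq_or_lt with rfl | hb
    · rw [hvT₁]; ring
    have hc : ContinuousOn (fun t => F (v t)) (Set.Icc T₁ b) := by
      intro t ht
      exact (hFd _ (hp t ht)).continuousAt.comp_continuousWithinAt
        ((hvc t ht.1).mono (fun x hx => hx.1))
    obtain ⟨c, hc1, hc2⟩ := exists_hasDerivAt_eq_slope (fun t => F (v t)) (fun _ => 1) hb hc (by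
      intro t ht
      have hpt := hp t ⟨ht.1.le, ht.2.le⟩
      have := (hFd _ hpt).comp t (hode t ht.1)
      have hne := (hpos _ hpt).ne'
      have he : -(1 / f (v t)) * -(f (v t)) = 1 := by
        rw [neg_mul_neg, one_div, inv_mul_cancel₀ hne]
      rw [he] at this
      exact this)
    have : b - T₁ ≠ 0 := (sub_pos.2 hb).ne'
    rw [eq_div_iff this] at hc2
    simp only [hvT₁] at hc2
    linarith
  have hvpos : ∀ t : ℝ, T₁ ≤ t → 0 < v t := by
    intro t₀ ht₀
    by_contra hneg
    have hcc : ContinuousOn v (Set.Icc T₁ t₀) := hvc.mono (fun x hx => hx.1)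
    have hcl : IsCompact (Set.Icc T₁ t₀ ∩ v ⁻¹' Set.Iic 0) :=
      isCompact_Icc.of_isClosed_subset
        (hcc.preimage_isClosed_of_isClosed isClosed_Icc isClosed_Iic) Set.inter_subset_left
    obtain ⟨m, ⟨hm1, hm2⟩, hm3⟩ := hcl.exists_isLeast ⟨t₀, ⟨ht₀, le_rfl⟩, not_lt.1 hneg⟩
    have hm2 : v m ≤ 0 := hm2
    have hbef : ∀ t, T₁ ≤ t → t < m → 0 < v t := by
      intro t h1 h2
      by_contra h
      exact absurd (hm3 ⟨⟨h1, h2.le.trans hm1.2⟩, not_lt.1 h⟩) (not_le.2 h2)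
    have hFv : 0 < F v₀ := hbij.mapsTo hv₀
    obtain ⟨s, hs, hsF⟩ := hbij.surjOn
      (show F v₀ + (m - T₁) ∈ Set.Ioi (0:ℝ) from by
        have := hm1.1
        show 0 < F v₀ + (m - T₁)
        linarith)
    have hs : 0 < s := hs
    have hsv : s ≤ v₀ := (hanti.le_iff_ge hv₀ hs).1 (by have := hm1.1; linarith)
    obtain ⟨r, hr, hrs⟩ := intermediate_value_Icc' hm1.1
      (hvc.mono (fun x hx => hx.1)) (show s ∈ Set.Icc (v m) (v T₁) from
        ⟨hm2.trans hs.le, by rw [hvT₁]; exact hsv⟩)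
    have hrm : r < m := by
      rcases hr.2.eq_or_lt with h | h
      · subst h; linarith
      · exact h
    have := key r hr.1 (fun t ht => hbef t ht.1 (ht.2.trans_lt hrm))
    rw [hrs] at this
    linarith
  have main : ∀ t : ℝ, T₁ < t → t - T₁ ≤ F (v t) := by
    intro t ht
    have := key t ht.le (fun x hx => hvpos x hx.1)
    have hFv : 0 < F v₀ := hbij.mapsTo hv₀
    linarith
  have main2 : ∀ t : ℝ, T₁ < t → ∀ s : ℝ, 0 < s → F s ≤ t - T₁ → v t ≤ s := by
    intro t ht s hs h
    exact (hanti.le_iff_ge hs (hvpos t ht.le)).1 (h.trans (main t ht))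
  refine ⟨fun t ht => ⟨main t ht, ?_⟩, fun δ hδ t ht => ?_⟩
  · obtain ⟨s, hs, hsF⟩ := hbij.surjOn (show t - T₁ ∈ Set.Ioi (0:ℝ) from sub_pos.2 ht)
    rw [← hsF, hFinv.1 hs]
    exact main2 t ht s hs hsF.le
  · have hFd : 0 < F δ := hbij.mapsTo hδ
    have ht' : T₁ < t := by linarith
    exact ⟨hvpos t ht'.le, main2 t ht' δ hδ (by linarith)⟩
end
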